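/- arXiv:2003.05524 — 5 statements merged into one kernel-verified Lean document; each statement's English description precedes it below -/
import Mathlib

section
/- Fix n : ℕ and 0 ≤ k ≤ n. For θ ∈ ℝ let D_θ be the diagonal matrix indexed by bit strings (Fin n → Fin 2) with entry exp(i·θ·Σ_j (-1)^(x j)) at x (this is the n-fold tensor power of e^{iθZ}), and for 0 ≤ v ≤ n let ξ_v : ℝ → ℂ be the function ξ_v θ := (cos θ)^(n-v) · (i · sin θ)^v. Then the real span, inside the space of functions ℝ → ℂ, of the set {fun θ => Tr(A * D_θ) : A Hermitian, k-local, U(1)-invariant} is equal to the real span of {ξ_v : 0 ≤ v ≤ k}, and this subspace has real dimension k + 1. -/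
/-! STATEMENT 13: The real span of the character functions `θ ↦ Tr(A·D_θ)` of Hermitian
`k`-local U(1)-invariant matrices equals the real span of `ξ_v` for `0 ≤ v ≤ k`, a subspace
of real dimension `k+1`. -/

open Matrix

noncomputable section

/-- Pauli `Z_j` on `n` qubits. -/
def Zq (n : ℕ) (j : Fin n) : Matrix (Fin n → Fin 2) (Fin n → Fin 2) ℂ :=
  Matrix.diagonal fun x => (-1 : ℂ) ^ (x j : ℕ)

/-- Pauli `X_j` on `n` qubits. -/
def Xq (n : ℕ) (j : Fin n) : Matrix (Fin n → Fin 2) (Fin n → Fin 2) ℂ :=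
  fun x y => if y = Function.update x j (1 - x j) then 1 else 0

/-- Pauli `Y_j` on `n` qubits. -/
def Yq (n : ℕ) (j : Fin n) : Matrix (Fin n → Fin 2) (Fin n → Fin 2) ℂ :=
  fun x y => if y = Function.update x j (1 - x j) then Complex.I * (-1 : ℂ) ^ (y j : ℕ) else 0

/-- `R_{rs} = (X_r X_s + Y_r Y_s)/2`. -/
def Rq (n : ℕ) (r s : Fin n) : Matrix (Fin n → Fin 2) (Fin n → Fin 2) ℂ :=
  ((1 : ℂ) / 2) • (Xq n r * Xq n s + Yq n r * Yq n s)

/-- `Z^b = ∏_j Z_j^(b j)`, the diagonal matrix with entry `(-1)^(Σ_j b j · x j)` at `x`. -/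
def Zpow (n : ℕ) (b : Fin n → Fin 2) : Matrix (Fin n → Fin 2) (Fin n → Fin 2) ℂ :=
  Matrix.diagonal fun x => (-1 : ℂ) ^ (∑ j, (b j : ℕ) * (x j : ℕ))

/-- Hamming weight: the number of `j` with `b j = 1`. -/
def hamw (n : ℕ) (b : Fin n → Fin 2) : ℕ := (Finset.univ.filter fun j => b j = 1).card

/-- A matrix on `n` `d`-level sites is `k`-local if it acts nontrivially only on some set
`S` of at most `k` sites. -/
def IsKLocal (n d k : ℕ) (A : Matrix (Fin n → Fin d) (Fin n → Fin d) ℂ) : Prop :=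
  ∃ S : Finset (Fin n), S.card ≤ k ∧
    (∀ x y, (∃ j, j ∉ S ∧ x j ≠ y j) → A x y = 0) ∧
    (∀ x y x' y' : Fin n → Fin d,
      (∀ j ∈ S, x j = x' j) → (∀ j ∈ S, y j = y' j) →
      (∀ j ∉ S, x j = y j) → (∀ j ∉ S, x' j = y' j) → A x y = A x' y')

/-- `D_θ = (e^{iθZ})^{⊗n}`: diagonal with entry `exp(iθ·Σ_j (-1)^(x j))` at `x`. -/
def Dtheta (n : ℕ) (θ : ℝ) : Matrix (Fin n → Fin 2) (Fin n → Fin 2) ℂ :=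
  Matrix.diagonal fun x => Complex.exp (Complex.I * (θ : ℂ) * ∑ j, (-1 : ℂ) ^ (x j : ℕ))

/-- `ξ_v θ = (cos θ)^(n-v) · (i sin θ)^v`. -/
def xiFun (n v : ℕ) : ℝ → ℂ :=
  fun θ => ((Real.cos θ : ℂ)) ^ (n - v) * (Complex.I * (Real.sin θ : ℂ)) ^ v

/-!
Expanding `e^{iθZ} = cos θ + i sin θ Z` at every site gives `D_θ = ∑_b ξ_{|b|}(θ) Z^b`, so that
`Tr(A D_θ) = ∑_b Tr(A Z^b) ξ_{|b|}(θ)`. The coefficients are real for Hermitian `A`. If `A` is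
supported on `S` and `b j = 1` for some `j ∉ S`, then flipping bit `j` preserves the diagonal of `A`
and negates that of `Z^b`, so `Tr(A Z^b) = 0`; only weights `|b| ≤ |S| ≤ k` survive. The same
cancellation makes the `Z^b` orthogonal, so `A = Z^b` yields `2^n ξ_{|b|}`. Finally
`ξ_v = cos^n · (i tan)^v` for `v ≤ n`, and distinct powers of `i tan` are linearly independent.
-/

section Walsh

variable {ι : Type*} [Fintype ι]

/-- The Walsh function `x ↦ (-1)^(b · x)` on bit strings, which is the diagonal of `Z^b`. -/
def walsh (b x : ι → Fin 2) : ℂ := (-1) ^ ∑ j, (b j : ℕ) * (x j : ℕ)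

theorem walsh_mul_self (b x : ι → Fin 2) : walsh b x * walsh b x = 1 := by
  simp only [walsh, ← mul_pow, neg_mul_neg, one_mul, one_pow]

theorem star_walsh (b x : ι → Fin 2) : star (walsh b x) = walsh b x := by
  simp [walsh]

theorem walsh_eq_prod (b x : ι → Fin 2) :
    walsh b x = ∏ j, (-1 : ℂ) ^ ((b j : ℕ) * (x j : ℕ)) :=
  (Finset.prod_pow_eq_pow_sum _ _ _).symm

theorem walsh_add (b x y : ι → Fin 2) : walsh b (x + y) = walsh b x * walsh b y := by
  have neg_one_pow_mul_add (c p q : Fin 2) :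
      (-1 : ℂ) ^ ((c : ℕ) * ((p + q : Fin 2) : ℕ)) =
        (-1) ^ ((c : ℕ) * (p : ℕ)) * (-1) ^ ((c : ℕ) * (q : ℕ)) := by
    fin_cases c <;> fin_cases p <;> fin_cases q <;> simp
  simp only [walsh_eq_prod, Pi.add_apply, neg_one_pow_mul_add, Finset.prod_mul_distrib]

theorem walsh_single_one [DecidableEq ι] (b : ι → Fin 2) (j : ι) :
    walsh b (Pi.single j 1) = (-1) ^ (b j : ℕ) := by
  simp [walsh, Pi.single_apply, apply_ite Fin.val]

theorem dependsOn_walsh (b : ι → Fin 2) : DependsOn (walsh b) {j | b j = 1} := by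
  intro x y hxy
  refine congrArg ((-1 : ℂ) ^ ·) (Finset.sum_congr rfl fun j _ => ?_)
  obtain hj | hj : b j = 0 ∨ b j = 1 := by lia
  · simp [hj]
  · rw [hxy j hj]

variable [DecidableEq ι]

theorem sum_mul_walsh_eq_zero {f : (ι → Fin 2) → ℂ} {S : Set ι} (hf : DependsOn f S)
    {b : ι → Fin 2} {j : ι} (hj : j ∉ S) (hb : b j = 1) : ∑ x, f x * walsh b x = 0 := by
  let e : ι → Fin 2 := Pi.single j 1
  have f_flip (x : ι → Fin 2) : f (x + e) = f x :=
    hf fun i hi => by simp [e, Pi.single_eq_of_ne (ne_of_mem_of_not_mem hi hj)]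
  have walsh_flip (x : ι → Fin 2) : walsh b (x + e) = -walsh b x := by
    simp [e, walsh_add, walsh_single_one, hb]
  have sum_eq_neg : ∑ x, f x * walsh b x = -∑ x, f x * walsh b x := calc
    ∑ x, f x * walsh b x = ∑ x, f (x + e) * walsh b (x + e) :=
      (Equiv.sum_comp (Equiv.addRight e) fun x => f x * walsh b x).symm
    _ = -∑ x, f x * walsh b x := by
      simp only [f_flip, walsh_flip, mul_neg, Finset.sum_neg_distrib]
  exact self_eq_neg.mp sum_eq_neg

theorem sum_walsh_mul_walsh_of_ne {b c : ι → Fin 2} (hbc : b ≠ c) :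
    ∑ x, walsh b x * walsh c x = 0 := by
  obtain ⟨j, hj⟩ := Function.ne_iff.mp hbc
  obtain ⟨hbj, hcj⟩ | ⟨hbj, hcj⟩ : b j ≠ 1 ∧ c j = 1 ∨ c j ≠ 1 ∧ b j = 1 := by lia
  · exact sum_mul_walsh_eq_zero (dependsOn_walsh b) hbj hcj
  · simpa only [mul_comm] using sum_mul_walsh_eq_zero (dependsOn_walsh c) hbj hcj

theorem sum_walsh_mul_walsh (b c : ι → Fin 2) :
    ∑ x, walsh b x * walsh c x = if b = c then 2 ^ Fintype.card ι else 0 := by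
  split_ifs with hbc
  · simp [hbc, walsh_mul_self]
  · exact sum_walsh_mul_walsh_of_ne hbc

end Walsh

theorem Zpow_eq_diagonal_walsh (n : ℕ) (b : Fin n → Fin 2) : Zpow n b = diagonal (walsh b) := rfl

theorem conjTranspose_Zpow (n : ℕ) (b : Fin n → Fin 2) : (Zpow n b)ᴴ = Zpow n b := by
  rw [Zpow_eq_diagonal_walsh, diagonal_conjTranspose]
  exact congrArg diagonal (funext (star_walsh b))

theorem commute_Zpow_Zq (n : ℕ) (b : Fin n → Fin 2) (j : Fin n) : Commute (Zpow n b) (Zq n j) :=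
  commute_diagonal _ _

theorem trace_mul_Zpow {n : ℕ} (A : Matrix (Fin n → Fin 2) (Fin n → Fin 2) ℂ)
    (b : Fin n → Fin 2) : (A * Zpow n b).trace = ∑ x, A x x * walsh b x := by
  simp [Zpow_eq_diagonal_walsh, trace, mul_diagonal]

theorem trace_Zpow_mul_Zpow (n : ℕ) (b c : Fin n → Fin 2) :
    (Zpow n b * Zpow n c).trace = if b = c then 2 ^ n else 0 := by
  simp [Zpow_eq_diagonal_walsh, sum_walsh_mul_walsh]

theorem trace_mul_eq_ofReal_re {m : Type*} [Fintype m] {A B : Matrix m m ℂ}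
    (hA : A.IsHermitian) (hB : B.IsHermitian) : (((A * B).trace.re : ℝ) : ℂ) = (A * B).trace := by
  rw [← Complex.conj_eq_iff_re, starRingEnd_apply, ← trace_conjTranspose, conjTranspose_mul,
    hA.eq, hB.eq, trace_mul_comm]

theorem IsKLocal.exists_dependsOn_diag {n d k : ℕ}
    {A : Matrix (Fin n → Fin d) (Fin n → Fin d) ℂ} (hA : IsKLocal n d k A) :
    ∃ S : Finset (Fin n), S.card ≤ k ∧ DependsOn A.diag S := by
  obtain ⟨S, hS, -, hlocal⟩ := hA
  exact ⟨S, hS, fun x y hxy => hlocal x x y y hxy hxy (fun _ _ => rfl) fun _ _ => rfl⟩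

theorem isKLocal_diagonal {n d k : ℕ} {f : (Fin n → Fin d) → ℂ} {S : Finset (Fin n)}
    (hS : S.card ≤ k) (hf : DependsOn f S) : IsKLocal n d k (diagonal f) := by
  refine ⟨S, hS, ?_, ?_⟩
  · rintro x y ⟨j, -, hj⟩
    exact diagonal_apply_ne _ (ne_of_apply_ne (· j) hj)
  · intro x y x' y' hx hy hxy hxy'
    have eq_iff_eq : x = y ↔ x' = y' := by
      simp only [funext_iff]
      refine forall_congr' fun j => ?_
      by_cases hj : j ∈ S
      · rw [hx j hj, hy j hj]
      · simp only [hxy j hj, hxy' j hj]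
    simp only [diagonal_apply, eq_iff_eq, hf hx]

theorem hamw_eq_sum (n : ℕ) (b : Fin n → Fin 2) : hamw n b = ∑ j, (b j : ℕ) := by
  rw [hamw, Finset.card_filter]
  refine Finset.sum_congr rfl fun j _ => ?_
  split_ifs with hj <;> lia

theorem exists_hamw_eq {n v : ℕ} (hv : v ≤ n) : ∃ b : Fin n → Fin 2, hamw n b = v := by
  obtain ⟨T, -, hT⟩ := Finset.exists_subset_card_eq (s := (Finset.univ : Finset (Fin n)))
    (hv.trans_eq (Finset.card_fin n).symm)
  exact ⟨fun j => if j ∈ T then 1 else 0, by simp [hamw, hT]⟩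

theorem isKLocal_Zpow {n k : ℕ} {b : Fin n → Fin 2} (hb : hamw n b ≤ k) :
    IsKLocal n 2 k (Zpow n b) :=
  isKLocal_diagonal hb (f := walsh b) (by simpa using dependsOn_walsh b)

theorem IsKLocal.trace_mul_Zpow_eq_zero {n k : ℕ}
    {A : Matrix (Fin n → Fin 2) (Fin n → Fin 2) ℂ} (hA : IsKLocal n 2 k A) {b : Fin n → Fin 2}
    (hb : k < hamw n b) : (A * Zpow n b).trace = 0 := by
  obtain ⟨S, hS, hdiag⟩ := hA.exists_dependsOn_diag
  obtain ⟨j, hbj, hjS⟩ := Finset.exists_mem_notMem_of_card_lt_card (hS.trans_lt hb)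
  rw [trace_mul_Zpow]
  exact sum_mul_walsh_eq_zero hdiag hjS (Finset.mem_filter.mp hbj).2

theorem exp_I_mul_neg_one_pow (z : ℂ) (p : Fin 2) :
    Complex.exp (Complex.I * z * (-1) ^ (p : ℕ)) =
      ∑ c : Fin 2, Complex.cos z ^ (1 - (c : ℕ)) * (Complex.I * Complex.sin z) ^ (c : ℕ) *
        (-1) ^ ((c : ℕ) * (p : ℕ)) := by
  rw [show Complex.I * z * (-1) ^ (p : ℕ) = ((-1) ^ (p : ℕ) * z) * Complex.I by ring,
    Complex.exp_mul_I, Fin.sum_univ_two]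
  fin_cases p <;> simp <;> ring

theorem xiFun_hamw (n : ℕ) (b : Fin n → Fin 2) (θ : ℝ) :
    xiFun n (hamw n b) θ = ∏ j, Complex.cos θ ^ (1 - (b j : ℕ)) *
      (Complex.I * Complex.sin θ) ^ (b j : ℕ) := by
  have sum_one_sub : ∑ j, (1 - (b j : ℕ)) = n - ∑ j, (b j : ℕ) := by
    rw [Finset.sum_tsub_distrib _ fun j _ => Nat.le_of_lt_succ (b j).isLt]
    simp
  rw [Finset.prod_mul_distrib, Finset.prod_pow_eq_pow_sum, Finset.prod_pow_eq_pow_sum,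
    sum_one_sub, ← hamw_eq_sum, xiFun, Complex.ofReal_cos, Complex.ofReal_sin]

theorem Dtheta_eq_sum (n : ℕ) (θ : ℝ) :
    Dtheta n θ = ∑ b, xiFun n (hamw n b) θ • Zpow n b := by
  have entry_eq_sum (x : Fin n → Fin 2) :
      Complex.exp (Complex.I * θ * ∑ j, (-1 : ℂ) ^ (x j : ℕ)) =
        ∑ b, xiFun n (hamw n b) θ * walsh b x := by
    simp only [Finset.mul_sum, Complex.exp_sum, exp_I_mul_neg_one_pow, Finset.prod_univ_sum,
      Fintype.piFinset_univ, Finset.prod_mul_distrib, xiFun_hamw, walsh_eq_prod]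
  ext x y
  rw [Dtheta, Matrix.sum_apply]
  obtain rfl | hxy := eq_or_ne x y
  · simp [entry_eq_sum, Zpow_eq_diagonal_walsh]
  · simp [hxy, Zpow_eq_diagonal_walsh]

theorem trace_mul_Dtheta {n : ℕ} (A : Matrix (Fin n → Fin 2) (Fin n → Fin 2) ℂ) (θ : ℝ) :
    (A * Dtheta n θ).trace = ∑ b, xiFun n (hamw n b) θ * (A * Zpow n b).trace := by
  simp only [Dtheta_eq_sum, Finset.mul_sum, trace_sum, mul_smul_comm, trace_smul, smul_eq_mul]

theorem trace_Zpow_mul_Dtheta (n : ℕ) (b : Fin n → Fin 2) (θ : ℝ) :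
    (Zpow n b * Dtheta n θ).trace = 2 ^ n * xiFun n (hamw n b) θ := by
  simp [trace_mul_Dtheta, trace_Zpow_mul_Zpow, mul_comm]

/-- The real span of `ξ_0, …, ξ_k`. -/
def xiSpan (n k : ℕ) : Submodule ℝ (ℝ → ℂ) :=
  Submodule.span ℝ {f | ∃ v : ℕ, v ≤ k ∧ f = xiFun n v}

/-- The functions `θ ↦ Tr(A D_θ)` of the Hermitian, `k`-local, U(1)-invariant matrices `A`. -/
def charFuns (n k : ℕ) : Set (ℝ → ℂ) :=
  {f | ∃ A : Matrix (Fin n → Fin 2) (Fin n → Fin 2) ℂ,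
    Aᴴ = A ∧ IsKLocal n 2 k A ∧ A * (∑ j, Zq n j) = (∑ j, Zq n j) * A ∧
    f = fun θ => (A * Dtheta n θ).trace}

theorem trace_mul_Dtheta_mem_xiSpan {n k : ℕ} {A : Matrix (Fin n → Fin 2) (Fin n → Fin 2) ℂ}
    (hA : A.IsHermitian) (hlocal : IsKLocal n 2 k A) :
    (fun θ => (A * Dtheta n θ).trace) ∈ xiSpan n k := by
  have expansion : (fun θ => (A * Dtheta n θ).trace) =
      ∑ b, (A * Zpow n b).trace.re • xiFun n (hamw n b) := by
    ext θ
    simp [trace_mul_Dtheta, trace_mul_eq_ofReal_re hA (conjTranspose_Zpow n _), mul_comm]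
  rw [expansion]
  refine Submodule.sum_mem _ fun b _ => ?_
  obtain hb | hb := le_or_gt (hamw n b) k
  · exact Submodule.smul_mem _ _ (Submodule.subset_span ⟨_, hb, rfl⟩)
  · simp [hlocal.trace_mul_Zpow_eq_zero hb]

theorem xiFun_mem_span_charFuns {n k v : ℕ} (hvn : v ≤ n) (hvk : v ≤ k) :
    xiFun n v ∈ Submodule.span ℝ (charFuns n k) := by
  obtain ⟨b, rfl⟩ := exists_hamw_eq hvn
  have hZpow : (fun θ => (Zpow n b * Dtheta n θ).trace) ∈ charFuns n k :=
    ⟨Zpow n b, conjTranspose_Zpow n b, isKLocal_Zpow hvk,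
      Commute.sum_right _ _ _ fun j _ => commute_Zpow_Zq n b j, rfl⟩
  have xiFun_eq_smul :
      xiFun n (hamw n b) = ((2 : ℝ) ^ n)⁻¹ • fun θ => (Zpow n b * Dtheta n θ).trace := by
    ext θ
    simp [trace_Zpow_mul_Dtheta]
  rw [xiFun_eq_smul]
  exact Submodule.smul_mem _ _ (Submodule.subset_span hZpow)

theorem span_charFuns {n k : ℕ} (hk : k ≤ n) :
    Submodule.span ℝ (charFuns n k) = xiSpan n k := by
  refine le_antisymm (Submodule.span_le.mpr ?_) (Submodule.span_le.mpr ?_)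
  · rintro _ ⟨A, hA, hlocal, -, rfl⟩
    exact trace_mul_Dtheta_mem_xiSpan hA hlocal
  · rintro _ ⟨v, hv, rfl⟩
    exact xiFun_mem_span_charFuns (hv.trans hk) hv

theorem xiFun_arctan {n v : ℕ} (hv : v ≤ n) (t : ℝ) :
    xiFun n v (Real.arctan t) = (Real.cos (Real.arctan t) : ℂ) ^ n * (Complex.I * t) ^ v := by
  have sin_eq : Real.sin (Real.arctan t) = t * Real.cos (Real.arctan t) := by
    simpa using (Real.tan_mul_cos (Real.cos_arctan_pos t).ne').symm
  rw [xiFun, sin_eq, ← pow_sub_mul_pow _ hv]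
  push_cast
  ring

theorem linearIndepOn_xiFun (n : ℕ) : LinearIndepOn ℂ (xiFun n) (Set.Iic n) := by
  rw [← Finset.coe_Iic, linearIndepOn_finset_iff]
  intro c hc
  let P : Polynomial ℂ := ∑ v ∈ Finset.Iic n, Polynomial.C (c v) * Polynomial.X ^ v
  have isRoot (t : ℝ) : P.IsRoot (Complex.I * t) := by
    have hcos : (Real.cos (Real.arctan t) : ℂ) ^ n ≠ 0 :=
      pow_ne_zero _ (Complex.ofReal_ne_zero.mpr (Real.cos_arctan_pos t).ne')
    refine (mul_eq_zero.mp ?_).resolve_left hcos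
    calc (Real.cos (Real.arctan t) : ℂ) ^ n * P.eval (Complex.I * t)
        = ∑ v ∈ Finset.Iic n, c v * xiFun n v (Real.arctan t) := by
          simp only [P, Polynomial.eval_finsetSum, Finset.mul_sum, Polynomial.eval_mul,
            Polynomial.eval_C, Polynomial.eval_pow, Polynomial.eval_X]
          refine Finset.sum_congr rfl fun v hv => ?_
          rw [xiFun_arctan (Finset.mem_Iic.mp hv), mul_left_comm]
      _ = 0 := by simpa using congrFun hc (Real.arctan t)
  have I_mul_injective : Function.Injective fun t : ℝ => Complex.I * t :=
    (mul_right_injective₀ Complex.I_ne_zero).comp Complex.ofReal_injective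
  have P_eq_zero : P = 0 := P.eq_zero_of_infinite_isRoot <|
    (Set.infinite_range_of_injective I_mul_injective).mono (Set.range_subset_iff.mpr isRoot)
  intro v hv
  simpa [P, Polynomial.finsetSum_coeff, Finset.mem_Iic.mp hv] using
    congrArg (Polynomial.coeff · v) P_eq_zero

theorem finrank_xiSpan {n k : ℕ} (hk : k ≤ n) : Module.finrank ℝ (xiSpan n k) = k + 1 := by
  have linearIndependent : LinearIndependent ℝ fun v : Set.Iic k => xiFun n v :=
    ((linearIndepOn_xiFun n).mono (Set.Iic_subset_Iic.mpr hk)).restrict_scalars' ℝ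
  have xiSpan_eq : xiSpan n k = Submodule.span ℝ (Set.range fun v : Set.Iic k => xiFun n v) := by
    refine congrArg (Submodule.span ℝ) (Set.ext fun f => ?_)
    simp [eq_comm]
  rw [xiSpan_eq, finrank_span_eq_card linearIndependent]
  simp

theorem stmt13 (n k : ℕ) (hk : k ≤ n) :
    (Submodule.span ℝ
        {f : ℝ → ℂ | ∃ A : Matrix (Fin n → Fin 2) (Fin n → Fin 2) ℂ,
          Aᴴ = A ∧ IsKLocal n 2 k A ∧ A * (∑ j, Zq n j) = (∑ j, Zq n j) * A ∧
          f = fun θ => (A * Dtheta n θ).trace} =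
      Submodule.span ℝ {f : ℝ → ℂ | ∃ v : ℕ, v ≤ k ∧ f = xiFun n v}) ∧
    Module.finrank ℝ
        (Submodule.span ℝ {f : ℝ → ℂ | ∃ v : ℕ, v ≤ k ∧ f = xiFun n v}) = k + 1 :=
  ⟨span_charFuns hk, finrank_xiSpan hk⟩

end
end

section
/- Fix n : ℕ, let m ≥ 2, and let j_1, …, j_m be pairwise distinct sites in Fin n. Define the nested commutator K as follows: if m is odd, K := [R_{j_1 j_m}, [R_{j_m j_{m-1}}, [⋯, [R_{j_3 j_2}, R_{j_2 j_1}]⋯]]]; if m is even, K := [R_{j_1 j_m}, [R_{j_m j_{m-1}}, [⋯, [R_{j_3 j_2}, [R_{j_2 j_1}, (1/2) • Z_{j_1}]]⋯]]]. Then there exists c ∈ {1, -1} (depending only on m) such that (Z_{j_1} - Z_{j_m}) * (Z_{j_1} * Z_{j_2} * ⋯ * Z_{j_m}) = c • K. -/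
/-! STATEMENT 14: The nested-commutator identity
`(Z_{j_1} - Z_{j_m})·Z_{j_1}⋯Z_{j_m} = ±[R_{j_1 j_m}, [R_{j_m j_{m-1}}, [⋯]]]`
(with innermost term `[R_{j_3 j_2}, R_{j_2 j_1}]` for odd `m`, and
`[R_{j_2 j_1}, (1/2)Z_{j_1}]` for even `m`). -/

open Matrix

noncomputable section

/-- The inner chain of nested commutators: `chainFrom j base off 0 = base` and
`chainFrom j base off (t+1) = ⁅R_{j (t+off+1), j (t+off)}, chainFrom j base off t⁆`. -/
def chainFrom (n : ℕ) (j : ℕ → Fin n)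
    (base : Matrix (Fin n → Fin 2) (Fin n → Fin 2) ℂ) (off : ℕ) :
    ℕ → Matrix (Fin n → Fin 2) (Fin n → Fin 2) ℂ
  | 0 => base
  | t + 1 => ⁅Rq n (j (t + off + 1)) (j (t + off)), chainFrom n j base off t⁆

/-!
Away from `r = s` one has `R_{rs} = X_r X_s (1 - Z_r Z_s) / 2`, whence
`[R_{ts}, R_{sr}] = -R_{tr} Z_r Z_s`, `[R_{rs}, Z_s] = 2 R_{rs} Z_s` and
`R_{rs}² = (1 - Z_r Z_s) / 2`, while `R_{rs}` commutes with every other `Z_q`. So each commutator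
of the chain telescopes one more edge into `R_{j_t j_1}` and produces a factor `-Z_{j_1} Z_{j_t}`.
After the last edge of the path the power of `Z_{j_1}` is odd: for odd `m` because `m - 2` factors
were produced, for even `m` because of the additional `Z_{j_1}` in the innermost commutator.
Closing the cycle turns `R_{j_m j_1} Z_{j_1}` into `Z_{j_1} - Z_{j_m}`.
-/

section Commutator

variable {A : Type*} [Ring A] {a b c : A}

lemma lie_mul_leibniz (a b c : A) : ⁅a, b * c⁆ = ⁅a, b⁆ * c + b * ⁅a, c⁆ := by
  simp only [Ring.lie_def]
  noncomm_ring

lemma lie_mul_of_commute_left (hab : Commute a b) : ⁅a, b * c⁆ = b * ⁅a, c⁆ := by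
  rw [lie_mul_leibniz, hab.lie_eq, zero_mul, zero_add]

lemma lie_mul_of_commute_right (hac : Commute a c) : ⁅a, b * c⁆ = ⁅a, b⁆ * c := by
  rw [lie_mul_leibniz, hac.lie_eq, mul_zero, add_zero]

-- Unlike `lie_smul`, this rewrites brackets that come directly from `Ring.instBracket`.
lemma lie_smul_right {R : Type*} [Monoid R] [DistribMulAction R A] [IsScalarTower R A A]
    [SMulCommClass R A A] (k : R) (a b : A) : ⁅a, k • b⁆ = k • ⁅a, b⁆ := by
  rw [Ring.lie_def, Ring.lie_def, mul_smul_comm, smul_mul_assoc, smul_sub]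

end Commutator

section PauliRelations

variable {n : ℕ}

lemma Zq_mul_self (r : Fin n) : Zq n r * Zq n r = 1 := by
  simp [Zq, ← mul_pow]

lemma Zq_pow_of_even (r : Fin n) {k : ℕ} (hk : Even k) : Zq n r ^ k = 1 := by
  obtain ⟨l, rfl⟩ := hk
  rw [pow_add, ← (Commute.refl (Zq n r)).mul_pow, Zq_mul_self, one_pow]

lemma commute_Zq (r s : Fin n) : Commute (Zq n r) (Zq n s) := by
  simp [Zq, commute_iff_eq, mul_comm]

lemma Xq_mul_apply (r : Fin n) (M : Matrix (Fin n → Fin 2) (Fin n → Fin 2) ℂ)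
    (x y : Fin n → Fin 2) :
    (Xq n r * M) x y = M (Function.update x r (1 - x r)) y := by
  simp [Matrix.mul_apply, Xq]

lemma Xq_mul_self (r : Fin n) : Xq n r * Xq n r = 1 := by
  ext x y
  rw [Xq_mul_apply]
  simp [Xq, Matrix.one_apply, eq_comm]

lemma commute_Xq (r s : Fin n) : Commute (Xq n r) (Xq n s) := by
  obtain rfl | hrs := eq_or_ne r s
  · exact Commute.refl _
  · ext x y
    simp only [Xq_mul_apply, Xq, Function.update_of_ne hrs, Function.update_of_ne hrs.symm,
      Function.update_comm hrs]

lemma Zq_mul_Xq_self (r : Fin n) : Zq n r * Xq n r = -(Xq n r * Zq n r) := by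
  have sign_flip : ∀ a : Fin 2, (-1 : ℂ) ^ ((1 - a : Fin 2) : ℕ) = -(-1) ^ (a : ℕ) := by
    intro a
    fin_cases a <;> simp
  ext x y
  by_cases hy : y = Function.update x r (1 - x r) <;>
    simp [Zq, Xq, Matrix.mul_diagonal, Matrix.diagonal_mul, hy, sign_flip]

lemma commute_Zq_Xq {r s : Fin n} (hrs : r ≠ s) : Commute (Zq n r) (Xq n s) := by
  ext x y
  by_cases hy : y = Function.update x s (1 - x s) <;>
    simp [Zq, Xq, Matrix.mul_diagonal, Matrix.diagonal_mul, hy, Function.update_of_ne hrs]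

lemma Yq_eq_smul_Xq_mul_Zq (r : Fin n) : Yq n r = Complex.I • (Xq n r * Zq n r) := by
  ext x y
  simp [Yq, Xq, Zq, Matrix.mul_diagonal]

end PauliRelations

section Exchange

variable {n : ℕ} {q r s t : Fin n}

lemma Rq_eq_smul_Xq_mul_Xq_mul (hrs : r ≠ s) :
    Rq n r s = (1 / 2 : ℂ) • (Xq n r * Xq n s * (1 - Zq n r * Zq n s)) := by
  have hYY : Yq n r * Yq n s = -(Xq n r * Xq n s * (Zq n r * Zq n s)) := by
    rw [Yq_eq_smul_Xq_mul_Zq, Yq_eq_smul_Xq_mul_Zq, smul_mul_smul_comm, Complex.I_mul_I,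
      neg_one_smul, (commute_Zq_Xq hrs).mul_mul_mul_comm]
  rw [Rq, hYY, mul_sub, mul_one, sub_eq_add_neg]

lemma Rq_comm (r s : Fin n) : Rq n r s = Rq n s r := by
  obtain rfl | hrs := eq_or_ne r s
  · rfl
  · rw [Rq_eq_smul_Xq_mul_Xq_mul hrs, Rq_eq_smul_Xq_mul_Xq_mul hrs.symm, (commute_Xq r s).eq,
      (commute_Zq r s).eq]

lemma commute_Rq_Zq (hqr : q ≠ r) (hqs : q ≠ s) : Commute (Rq n r s) (Zq n q) := by
  have hX {a : Fin n} (ha : q ≠ a) : Commute (Xq n a) (Zq n q) := (commute_Zq_Xq ha).symm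
  have hY {a : Fin n} (ha : q ≠ a) : Commute (Yq n a) (Zq n q) := by
    rw [Yq_eq_smul_Xq_mul_Zq]
    exact ((hX ha).mul_left (commute_Zq a q)).smul_left _
  exact (((hX hqr).mul_left (hX hqs)).add_left ((hY hqr).mul_left (hY hqs))).smul_left _

lemma Zq_mul_Xq_mul_Xq (hrs : r ≠ s) :
    Zq n s * (Xq n r * Xq n s) = -(Xq n r * Xq n s * Zq n s) := by
  rw [(commute_Zq_Xq hrs.symm).left_comm, Zq_mul_Xq_self, mul_neg, mul_assoc]

lemma Zq_mul_Rq (hrs : r ≠ s) : Zq n s * Rq n r s = -(Rq n r s * Zq n s) := by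
  have hZ : Commute (Zq n s) (1 - Zq n r * Zq n s) :=
    (Commute.one_right _).sub_right ((commute_Zq s r).mul_right (commute_Zq s s))
  rw [Rq_eq_smul_Xq_mul_Xq_mul hrs, mul_smul_comm, smul_mul_assoc, ← smul_neg, ← mul_assoc,
    Zq_mul_Xq_mul_Xq hrs, neg_mul, mul_assoc, hZ.eq, ← mul_assoc]

lemma lie_Rq_Zq (hrs : r ≠ s) : ⁅Rq n r s, Zq n s⁆ = (2 : ℂ) • (Rq n r s * Zq n s) := by
  rw [Ring.lie_def, Zq_mul_Rq hrs, sub_neg_eq_add, two_smul]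

lemma Rq_mul_self (hrs : r ≠ s) : Rq n r s * Rq n r s = (1 / 2 : ℂ) • (1 - Zq n r * Zq n s) := by
  have hXX : Xq n r * Xq n s * (Xq n r * Xq n s) = 1 := by
    rw [(commute_Xq s r).mul_mul_mul_comm, Xq_mul_self, Xq_mul_self, one_mul]
  have hZZ : Zq n r * Zq n s * (Zq n r * Zq n s) = 1 := by
    rw [(commute_Zq s r).mul_mul_mul_comm, Zq_mul_self, Zq_mul_self, one_mul]
  have hproj : (1 - Zq n r * Zq n s) * (1 - Zq n r * Zq n s) =
      (2 : ℂ) • (1 - Zq n r * Zq n s) := by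
    rw [sub_mul, one_mul, mul_sub, mul_one, hZZ, two_smul]
    abel
  have hr : Zq n r * (Xq n r * Xq n s) = -(Xq n r * Xq n s * Zq n r) := by
    rw [(commute_Xq r s).eq, Zq_mul_Xq_mul_Xq hrs.symm]
  have hZX : Commute (Zq n r * Zq n s) (Xq n r * Xq n s) := by
    rw [commute_iff_eq, mul_assoc, Zq_mul_Xq_mul_Xq hrs, mul_neg, ← mul_assoc, hr, neg_mul,
      neg_neg, mul_assoc]
  rw [Rq_eq_smul_Xq_mul_Xq_mul hrs, smul_mul_smul_comm,
    ((Commute.one_left _).sub_left hZX).mul_mul_mul_comm, hXX, one_mul, hproj, smul_smul]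
  norm_num

lemma Rq_mul_Rq (hst : s ≠ t) (hrs : r ≠ s) (hrt : r ≠ t) :
    Rq n t s * Rq n s r =
      (1 / 4 : ℂ) • (Xq n t * Xq n r * ((1 + Zq n t * Zq n s) * (1 - Zq n s * Zq n r))) := by
  have hanti : (1 - Zq n t * Zq n s) * Xq n s = Xq n s * (1 + Zq n t * Zq n s) := by
    rw [sub_mul, one_mul, mul_add, mul_one, mul_assoc, Zq_mul_Xq_self, mul_neg, sub_neg_eq_add,
      (commute_Zq_Xq hst.symm).left_comm]
  have hcomm : Commute (1 + Zq n t * Zq n s) (Xq n r) :=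
    (Commute.one_left _).add_left
      ((commute_Zq_Xq hrt.symm).mul_left (commute_Zq_Xq hrs.symm))
  rw [Rq_eq_smul_Xq_mul_Xq_mul hst.symm, Rq_eq_smul_Xq_mul_Xq_mul hrs.symm, smul_mul_smul_comm]
  congr 1
  · norm_num
  · calc Xq n t * Xq n s * (1 - Zq n t * Zq n s) * (Xq n s * Xq n r * (1 - Zq n s * Zq n r))
        = Xq n t * Xq n s * ((1 - Zq n t * Zq n s) * Xq n s) * Xq n r *
            (1 - Zq n s * Zq n r) := by simp only [mul_assoc]
      _ = Xq n t * (Xq n s * Xq n s) * ((1 + Zq n t * Zq n s) * Xq n r) *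
            (1 - Zq n s * Zq n r) := by simp only [hanti, mul_assoc]
      _ = Xq n t * Xq n r * ((1 + Zq n t * Zq n s) * (1 - Zq n s * Zq n r)) := by
        rw [Xq_mul_self, mul_one, hcomm.eq]
        simp only [mul_assoc]

lemma lie_Rq_Rq (hst : s ≠ t) (hrs : r ≠ s) (hrt : r ≠ t) :
    ⁅Rq n t s, Rq n s r⁆ = -(Rq n t r * (Zq n r * Zq n s)) := by
  have hcomm : Commute (Zq n t * Zq n s) (Zq n r * Zq n s) :=
    ((commute_Zq t r).mul_left (commute_Zq s r)).mul_right
      ((commute_Zq t s).mul_left (commute_Zq s s))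
  have hcancel : Zq n t * Zq n r * (Zq n r * Zq n s) = Zq n t * Zq n s := by
    rw [mul_assoc, ← mul_assoc (Zq n r), Zq_mul_self, one_mul]
  have hZ : (1 + Zq n t * Zq n s) * (1 - Zq n r * Zq n s) -
      (1 + Zq n r * Zq n s) * (1 - Zq n t * Zq n s) =
      (-2 : ℂ) • ((1 - Zq n t * Zq n r) * (Zq n r * Zq n s)) := by
    rw [sub_mul, one_mul, hcancel, neg_smul, two_smul, add_mul, add_mul, mul_sub, mul_sub,
      hcomm.eq]
    noncomm_ring
  rw [Ring.lie_def, Rq_mul_Rq hst hrs hrt, Rq_comm s r, Rq_comm t s,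
    Rq_mul_Rq hrs.symm hst.symm hrt.symm, (commute_Xq r t).eq, (commute_Zq s r).eq,
    (commute_Zq s t).eq, ← smul_sub, ← mul_sub, hZ, Rq_eq_smul_Xq_mul_Xq_mul hrt.symm]
  simp only [mul_smul_comm, smul_mul_assoc, smul_smul, mul_assoc, ← neg_smul]
  norm_num

lemma lie_Rq_Rq_mul_Zq (hrs : r ≠ s) : ⁅Rq n r s, Rq n r s * Zq n s⁆ = Zq n s - Zq n r := by
  rw [lie_mul_of_commute_left (Commute.refl _), lie_Rq_Zq hrs, mul_smul_comm, ← mul_assoc,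
    Rq_mul_self hrs, smul_mul_assoc, sub_mul, one_mul, mul_assoc, Zq_mul_self, mul_one, smul_smul]
  norm_num

end Exchange

section Chain

/-- The Pauli string `Z_{j 0} ⋯ Z_{j (t - 1)}`, as a list product since
`Matrix` is not commutative. -/
def zString (n : ℕ) (j : ℕ → Fin n) (t : ℕ) : Matrix (Fin n → Fin 2) (Fin n → Fin 2) ℂ :=
  ((List.range t).map fun i => Zq n (j i)).prod

variable {n : ℕ} {j : ℕ → Fin n} {t : ℕ}

lemma zString_succ (j : ℕ → Fin n) (t : ℕ) :
    zString n j (t + 1) = zString n j t * Zq n (j t) := by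
  simp [zString, List.range_succ]

lemma zString_succ' (j : ℕ → Fin n) (t : ℕ) :
    zString n j (t + 1) = Zq n (j 0) * zString n (fun i => j (i + 1)) t := by
  simp [zString, List.range_succ_eq_map, Function.comp_def]

lemma commute_zString {M : Matrix (Fin n → Fin 2) (Fin n → Fin 2) ℂ}
    (h : ∀ i < t, Commute M (Zq n (j i))) : Commute M (zString n j t) :=
  Commute.list_prod_right _ _ (by simpa using h)

lemma chainFrom_zero_succ (j : ℕ → Fin n) (base : Matrix (Fin n → Fin 2) (Fin n → Fin 2) ℂ)
    (t : ℕ) :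
    chainFrom n j base 0 (t + 1) = chainFrom n j ⁅Rq n (j 1) (j 0), base⁆ 1 t := by
  induction t with
  | zero => rfl
  | succ t ih => rw [chainFrom, ih, chainFrom, add_zero]

lemma chainFrom_mul_right (base : Matrix (Fin n → Fin 2) (Fin n → Fin 2) ℂ) {off : ℕ}
    {W : Matrix (Fin n → Fin 2) (Fin n → Fin 2) ℂ}
    (hW : ∀ i < t, Commute (Rq n (j (i + off + 1)) (j (i + off))) W) :
    chainFrom n j (base * W) off t = chainFrom n j base off t * W := by
  induction t with
  | zero => rfl
  | succ t ih =>
    rw [chainFrom, ih fun i hi => hW i (by omega), lie_mul_of_commute_right (hW t (by omega)),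
      chainFrom]

lemma chainFrom_Rq (hj : Set.InjOn j (Set.Iio (t + 2))) :
    chainFrom n j (Rq n (j 1) (j 0)) 1 t =
      (-1 : ℂ) ^ t • (Rq n (j (t + 1)) (j 0) *
        (Zq n (j 0) ^ t * zString n (fun i => j (i + 1)) t)) := by
  induction t with
  | zero => simp [chainFrom, zString]
  | succ t ih =>
    have hne {a b : ℕ} (ha : a < t + 3) (hb : b < t + 3) (hab : a ≠ b) : j a ≠ j b :=
      hj.ne ha hb hab
    have hlast : j (t + 2) ≠ j (t + 1) := hne (by omega) (by omega) (by omega)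
    have hcomm {i : ℕ} (hi : i ≤ t) : Commute (Rq n (j (t + 2)) (j (t + 1))) (Zq n (j i)) :=
      commute_Rq_Zq (hne (by omega) (by omega) (by omega))
        (hne (by omega) (by omega) (by omega))
    have htail : Commute (Rq n (j (t + 2)) (j (t + 1)))
        (Zq n (j 0) ^ t * zString n (fun i => j (i + 1)) t) :=
      ((hcomm (Nat.zero_le t)).pow_right t).mul_right (commute_zString fun i hi => hcomm hi)
    have hZ : Commute (Zq n (j (t + 1))) (Zq n (j 0) ^ t * zString n (fun i => j (i + 1)) t) :=
      ((commute_Zq _ _).pow_right t).mul_right (commute_zString fun i _ => commute_Zq _ _)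
    rw [chainFrom, ih (hj.mono (Set.Iio_subset_Iio (by omega))), lie_smul_right,
      lie_mul_of_commute_right htail,
      lie_Rq_Rq hlast.symm (hne (by omega) (by omega) (by omega))
        (hne (by omega) (by omega) (by omega)),
      neg_mul, smul_neg, ← neg_smul, pow_succ (-1 : ℂ), mul_neg_one, mul_assoc, mul_assoc, hZ.eq,
      zString_succ, pow_succ' (Zq n (j 0))]
    simp only [mul_assoc]

lemma chainFrom_Rq_of_odd (hj : Set.InjOn j (Set.Iio (t + 2))) (ht : Odd t) :
    chainFrom n j (Rq n (j 1) (j 0)) 1 t =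
      (-1 : ℂ) ^ t • (Rq n (j (t + 1)) (j 0) * zString n j (t + 1)) := by
  obtain ⟨k, rfl⟩ := ht
  rw [chainFrom_Rq hj, pow_succ (Zq n (j 0)), Zq_pow_of_even _ (even_two_mul k), one_mul,
    ← zString_succ']

lemma chainFrom_Zq_of_even (hj : Set.InjOn j (Set.Iio (t + 2))) (ht : Even t) :
    chainFrom n j ((1 / 2 : ℂ) • Zq n (j 0)) 0 (t + 1) =
      (-1 : ℂ) ^ t • (Rq n (j (t + 1)) (j 0) * zString n j (t + 1)) := by
  have hne {a b : ℕ} (ha : a < t + 2) (hb : b < t + 2) (hab : a ≠ b) : j a ≠ j b :=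
    hj.ne ha hb hab
  have hbase : ⁅Rq n (j 1) (j 0), (1 / 2 : ℂ) • Zq n (j 0)⁆ = Rq n (j 1) (j 0) * Zq n (j 0) := by
    rw [lie_smul_right, lie_Rq_Zq (hne (by omega) (by omega) one_ne_zero), smul_smul]
    norm_num
  have hcomm : Commute (zString n (fun i => j (i + 1)) t) (Zq n (j 0)) :=
    (commute_zString fun i _ => commute_Zq _ _).symm
  rw [chainFrom_zero_succ, hbase, chainFrom_mul_right, chainFrom_Rq hj, Zq_pow_of_even _ ht,
    one_mul, smul_mul_assoc, mul_assoc, hcomm.eq, ← zString_succ']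
  intro i hi
  exact commute_Rq_Zq (hne (by omega) (by omega) (by omega))
    (hne (by omega) (by omega) (by omega))

lemma lie_Rq_Rq_mul_zString (hj : Set.InjOn j (Set.Iio (t + 2))) :
    ⁅Rq n (j 0) (j (t + 1)), Rq n (j (t + 1)) (j 0) * zString n j (t + 1)⁆ =
      -((Zq n (j 0) - Zq n (j (t + 1))) * zString n j (t + 2)) := by
  have hne {a b : ℕ} (ha : a < t + 2) (hb : b < t + 2) (hab : a ≠ b) : j a ≠ j b :=
    hj.ne ha hb hab
  have hends : j (t + 1) ≠ j 0 := hne (by omega) (by omega) (by omega)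
  have hR : Commute (Rq n (j (t + 1)) (j 0)) (zString n (fun i => j (i + 1)) t) :=
    commute_zString fun i hi => commute_Rq_Zq
      (hne (by omega) (by omega) (by omega)) (hne (by omega) (by omega) (by omega))
  have hZ : Commute (zString n (fun i => j (i + 1)) t) (Zq n (j (t + 1))) :=
    (commute_zString fun i _ => commute_Zq _ _).symm
  have hdiff : (Zq n (j 0) - Zq n (j (t + 1))) * (Zq n (j 0) * Zq n (j (t + 1))) =
      -(Zq n (j 0) - Zq n (j (t + 1))) := by
    rw [sub_mul, ← mul_assoc, Zq_mul_self, one_mul, (commute_Zq _ _).eq, ← mul_assoc, Zq_mul_self,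
      one_mul, neg_sub]
  calc ⁅Rq n (j 0) (j (t + 1)), Rq n (j (t + 1)) (j 0) * zString n j (t + 1)⁆
      = (Zq n (j 0) - Zq n (j (t + 1))) * zString n (fun i => j (i + 1)) t := by
        rw [Rq_comm (j 0), zString_succ', ← mul_assoc, lie_mul_of_commute_right hR,
          lie_Rq_Rq_mul_Zq hends]
    _ = -((Zq n (j 0) - Zq n (j (t + 1))) * zString n j (t + 2)) := by
        rw [zString_succ, zString_succ', mul_assoc (Zq n (j 0)), hZ.eq, ← mul_assoc (Zq n (j 0)),
          ← mul_assoc, hdiff, neg_mul, neg_neg]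

end Chain

theorem stmt14 (n m : ℕ) (hm : 2 ≤ m) (j : ℕ → Fin n)
    (hj : ∀ s t, s < m → t < m → j s = j t → s = t) :
    ∃ c : ℂ, (c = 1 ∨ c = -1) ∧
      (Zq n (j 0) - Zq n (j (m - 1))) * ((List.range m).map fun t => Zq n (j t)).prod =
        c • (if m % 2 = 1 then
          ⁅Rq n (j 0) (j (m - 1)), chainFrom n j (Rq n (j 1) (j 0)) 1 (m - 2)⁆
        else
          ⁅Rq n (j 0) (j (m - 1)), chainFrom n j (((1 : ℂ) / 2) • Zq n (j 0)) 0 (m - 1)⁆) := by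
  obtain ⟨t, rfl⟩ := Nat.exists_eq_add_of_le' hm
  have hinj : Set.InjOn j (Set.Iio (t + 2)) := fun a ha b hb => hj a b ha hb
  have hclose : (Zq n (j 0) - Zq n (j (t + 1))) * zString n j (t + 2) =
      (-1 : ℂ) ^ (t + 1) • ⁅Rq n (j 0) (j (t + 1)),
        (-1 : ℂ) ^ t • (Rq n (j (t + 1)) (j 0) * zString n j (t + 1))⁆ := by
    rw [lie_smul_right, lie_Rq_Rq_mul_zString hinj, smul_smul, ← pow_add,
      Odd.neg_one_pow ⟨t, by omega⟩, neg_one_smul, neg_neg]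
  refine ⟨(-1) ^ (t + 1), neg_one_pow_eq_or ℂ _, hclose.trans ?_⟩
  split_ifs with hodd
  · rw [Nat.add_sub_cancel, chainFrom_Rq_of_odd hinj (Nat.odd_iff.mpr (by omega))]
    rfl
  · rw [← chainFrom_Zq_of_even hinj (Nat.even_iff.mpr (by omega))]
    rfl

end
end

section
/- Let n ≥ 1, d ≥ 2, let j ≠ j' be distinct sites in Fin n, and let 1 ≤ l, l' ≤ d-1. On the extended index type (Fin n → Fin d) × Fin 2, the following identity of matrices holds: (R^{(l,l')}_{j,j'} ⊗ I_a) * Z_a = (1/2) • [R^{(l)}_{j,a}, [R^{(l')}_{j',a}, Z_a]], where [A,B] = A*B - B*A. (This is the identity that allows system-system interactions to be engineered from system-ancilla interactions via a catalyst qubit.) -/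
/-!
STATEMENT 16: The catalyst identity
`(R^{(l,l')}_{j,j'} ⊗ I_a) * Z_a = (1/2) • [R^{(l)}_{j,a}, [R^{(l')}_{j',a}, Z_a]]`.
-/

open Matrix

noncomputable section

/-- `l - 1` inside `Fin d` (truncated predecessor). -/
def fpred {d : ℕ} (l : Fin d) : Fin d := ⟨l.val - 1, lt_of_le_of_lt (Nat.sub_le _ _) l.isLt⟩

/-- `|l-1⟩⟨l|_j`. -/
def lowerOp (n d : ℕ) (j : Fin n) (l : Fin d) :
    Matrix (Fin n → Fin d) (Fin n → Fin d) ℂ :=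
  fun ρ σ => if σ j = l ∧ ρ = Function.update σ j (fpred l) then 1 else 0

/-- `|l⟩⟨l-1|_j`. -/
def raiseOp (n d : ℕ) (j : Fin n) (l : Fin d) :
    Matrix (Fin n → Fin d) (Fin n → Fin d) ℂ :=
  fun ρ σ => if σ j = fpred l ∧ ρ = Function.update σ j l then 1 else 0

/-- `R^{(l,l')}_{j,j'}`. -/
def Rsys (n d : ℕ) (j j' : Fin n) (l l' : Fin d) :
    Matrix (Fin n → Fin d) (Fin n → Fin d) ℂ :=
  lowerOp n d j l * raiseOp n d j' l' + raiseOp n d j l * lowerOp n d j' l'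

/-- `Z_a`, Pauli-Z on the ancilla qubit. -/
def Za (n d : ℕ) : Matrix ((Fin n → Fin d) × Fin 2) ((Fin n → Fin d) × Fin 2) ℂ :=
  Matrix.diagonal fun p => (-1 : ℂ) ^ (p.2 : ℕ)

/-- `R^{(l)}_{j,a}`, the system-ancilla energy-conserving coupling. -/
def Ranc (n d : ℕ) (j : Fin n) (l : Fin d) :
    Matrix ((Fin n → Fin d) × Fin 2) ((Fin n → Fin d) × Fin 2) ℂ :=
  fun p q =>
    if p.2 = 1 ∧ q.2 = 0 ∧ q.1 j = l ∧ p.1 = Function.update q.1 j (fpred l) then 1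
    else if p.2 = 0 ∧ q.2 = 1 ∧ q.1 j = fpred l ∧ p.1 = Function.update q.1 j l then 1
    else 0

/-- `A ⊗ I_a`. -/
def extAnc (n d : ℕ) (A : Matrix (Fin n → Fin d) (Fin n → Fin d) ℂ) :
    Matrix ((Fin n → Fin d) × Fin 2) ((Fin n → Fin d) × Fin 2) ℂ :=
  fun p q => if p.2 = q.2 then A p.1 q.1 else 0

/-!
`Z_a` anticommutes with every coupling that flips the ancilla, so the nested commutator equals
`2 {R_j, R_j'} Z_a`. Flipping the ancilla twice restores it, and operators on distinct sites
commute, so the anticommutator contributes the same system operator in both ancilla states: it is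
the system-system interaction tensored with the identity.
-/

open scoped Kronecker

section Ring

variable {A : Type*} [Ring A] {x y z : A}

lemma lie_lie_of_anticommute (hx : z * x = -(x * z)) (hy : z * y = -(y * z)) :
    ⁅x, ⁅y, z⁆⁆ = 2 • ((x * y + y * x) * z) := by
  have inner_lie : ⁅y, z⁆ = 2 • (y * z) := by
    rw [Ring.lie_def, hy, sub_neg_eq_add, two_nsmul]
  calc
    ⁅x, ⁅y, z⁆⁆ = 2 • (x * y * z - y * (z * x)) := by
      rw [inner_lie, Ring.lie_def, mul_smul_comm, smul_mul_assoc, smul_sub, mul_assoc, mul_assoc]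
    _ = 2 • ((x * y + y * x) * z) := by
      rw [hx, mul_neg, sub_neg_eq_add, ← mul_assoc y, add_mul]

end Ring

section SiteKetBra

variable {ι α : Type*} [Fintype ι] [DecidableEq ι] [DecidableEq α]

/-- The operator `|b⟩⟨a|` on site `i`, tensored with the identity on all other sites, in the basis
of configurations `ι → α`. The target level `b` precedes the source level `a`, as in the bra-ket
notation. -/
def siteKetBra (R : Type*) [Zero R] [One R] (i : ι) (b a : α) : Matrix (ι → α) (ι → α) R :=
  fun ρ σ => if σ i = a ∧ ρ = Function.update σ i b then 1 else 0

variable [Fintype α] {R : Type*} [NonAssocSemiring R] {i i' : ι}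

lemma siteKetBra_mul_apply (h : i ≠ i') (b a b' a' : α) (ρ σ : ι → α) :
    (siteKetBra R i b a * siteKetBra R i' b' a') ρ σ =
      if σ i' = a' ∧ σ i = a ∧ ρ = Function.update (Function.update σ i' b') i b
      then 1 else 0 := by
  rw [Matrix.mul_apply, Finset.sum_eq_single (Function.update σ i' b')]
  · simp [siteKetBra, Function.update_of_ne h, ← ite_and]
  · intro τ _ hτ
    simp [siteKetBra, hτ]
  · simp

lemma commute_siteKetBra (h : i ≠ i') (b a b' a' : α) :
    Commute (siteKetBra R i b a) (siteKetBra R i' b' a') := by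
  ext ρ σ
  rw [siteKetBra_mul_apply h, siteKetBra_mul_apply h.symm, Function.update_comm h]
  simp only [and_left_comm]

end SiteKetBra

section Ancilla

variable {m R : Type*}

/-- The Pauli matrix `Z` on a single qubit with basis `Fin 2`; `1 ⊗ₖ pauliZ R` is `Z` on the
ancilla, the second tensor factor. -/
def pauliZ (R : Type*) [Ring R] : Matrix (Fin 2) (Fin 2) R :=
  Matrix.diagonal fun β => (-1) ^ (β : ℕ)

/-- The coupling `A ⊗ |1⟩⟨0| + B ⊗ |0⟩⟨1|` of a system to an ancilla qubit: `A` acts on the system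
while the ancilla is excited, and `B` acts while it relaxes. -/
def ancillaExchange [Semiring R] (A B : Matrix m m R) : Matrix (m × Fin 2) (m × Fin 2) R :=
  A ⊗ₖ single 1 0 1 + B ⊗ₖ single 0 1 1

section Product

variable [Fintype m] [CommSemiring R]

lemma ancillaExchange_mul (A B C D : Matrix m m R) :
    ancillaExchange A B * ancillaExchange C D =
      (B * C) ⊗ₖ single 0 0 1 + (A * D) ⊗ₖ single 1 1 1 := by
  simp [ancillaExchange, add_mul, mul_add, ← Matrix.mul_kronecker_mul]

lemma ancillaExchange_anticommutator {A B C D : Matrix m m R}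
    (hAD : Commute A D) (hBC : Commute B C) :
    ancillaExchange A B * ancillaExchange C D + ancillaExchange C D * ancillaExchange A B =
      (A * D + B * C) ⊗ₖ (1 : Matrix (Fin 2) (Fin 2) R) := by
  have one_eq_single_add_single :
      (1 : Matrix (Fin 2) (Fin 2) R) = single 0 0 1 + single 1 1 1 := by
    ext x y
    fin_cases x <;> fin_cases y <;> simp
  rw [ancillaExchange_mul, ancillaExchange_mul, hAD.eq, hBC.eq, one_eq_single_add_single,
    Matrix.add_kronecker, Matrix.kronecker_add, Matrix.kronecker_add]
  abel

end Product

variable [Fintype m] [DecidableEq m] [CommRing R]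

lemma one_kronecker_pauliZ_mul_ancillaExchange (A B : Matrix m m R) :
    ((1 : Matrix m m R) ⊗ₖ pauliZ R) * ancillaExchange A B =
      -(ancillaExchange A B * ((1 : Matrix m m R) ⊗ₖ pauliZ R)) := by
  have pauliZ_mul_raise :
      pauliZ R * single 1 0 1 = (-1 : R) • (single 1 0 1 * pauliZ R) := by
    ext x y
    fin_cases x <;> fin_cases y <;> simp [pauliZ]
  have pauliZ_mul_lower :
      pauliZ R * single 0 1 1 = (-1 : R) • (single 0 1 1 * pauliZ R) := by
    ext x y
    fin_cases x <;> fin_cases y <;> simp [pauliZ]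
  simp only [ancillaExchange, mul_add, add_mul, ← Matrix.mul_kronecker_mul, one_mul, mul_one,
    pauliZ_mul_raise, pauliZ_mul_lower, Matrix.kronecker_smul]
  module

lemma lie_ancillaExchange_lie_ancillaExchange_pauliZ {A B C D : Matrix m m R}
    (hAD : Commute A D) (hBC : Commute B C) :
    ⁅ancillaExchange A B, ⁅ancillaExchange C D, (1 : Matrix m m R) ⊗ₖ pauliZ R⁆⁆ =
      2 • (((A * D + B * C) ⊗ₖ (1 : Matrix (Fin 2) (Fin 2) R)) *
        ((1 : Matrix m m R) ⊗ₖ pauliZ R)) := by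
  rw [lie_lie_of_anticommute (one_kronecker_pauliZ_mul_ancillaExchange A B)
    (one_kronecker_pauliZ_mul_ancillaExchange C D), ancillaExchange_anticommutator hAD hBC]

end Ancilla

theorem stmt16_general {ι α R : Type*} [Fintype ι] [DecidableEq ι] [Fintype α] [DecidableEq α]
    [CommRing R] {i i' : ι} (h : i ≠ i') (b a b' a' : α) :
    ⁅ancillaExchange (siteKetBra R i b a) (siteKetBra R i a b),
      ⁅ancillaExchange (siteKetBra R i' b' a') (siteKetBra R i' a' b'),
        (1 : Matrix (ι → α) (ι → α) R) ⊗ₖ pauliZ R⁆⁆ =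
      2 • (((siteKetBra R i b a * siteKetBra R i' a' b' +
          siteKetBra R i a b * siteKetBra R i' b' a') ⊗ₖ (1 : Matrix (Fin 2) (Fin 2) R)) *
        ((1 : Matrix (ι → α) (ι → α) R) ⊗ₖ pauliZ R)) :=
  lie_ancillaExchange_lie_ancillaExchange_pauliZ
    (commute_siteKetBra h b a a' b') (commute_siteKetBra h a b b' a')

section Encoding

variable (n d : ℕ)

lemma Za_eq_kronecker :
    Za n d = (1 : Matrix (Fin n → Fin d) (Fin n → Fin d) ℂ) ⊗ₖ pauliZ ℂ := by
  simp [Za, pauliZ, ← Matrix.diagonal_one, Matrix.diagonal_kronecker_diagonal]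

lemma extAnc_eq_kronecker (A : Matrix (Fin n → Fin d) (Fin n → Fin d) ℂ) :
    extAnc n d A = A ⊗ₖ (1 : Matrix (Fin 2) (Fin 2) ℂ) := by
  ext p q
  simp [extAnc, Matrix.one_apply]

lemma Rsys_eq_siteKetBra (j j' : Fin n) (l l' : Fin d) :
    Rsys n d j j' l l' =
      siteKetBra ℂ j (fpred l) l * siteKetBra ℂ j' l' (fpred l') +
        siteKetBra ℂ j l (fpred l) * siteKetBra ℂ j' (fpred l') l' :=
  rfl

lemma Ranc_eq_ancillaExchange (j : Fin n) (l : Fin d) :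
    Ranc n d j l =
      ancillaExchange (siteKetBra ℂ j (fpred l) l) (siteKetBra ℂ j l (fpred l)) := by
  ext ⟨ρ, x⟩ ⟨σ, y⟩
  fin_cases x <;> fin_cases y <;> simp [Ranc, ancillaExchange, siteKetBra]

end Encoding

theorem stmt16 (n d : ℕ) (hn : 1 ≤ n) (hd : 2 ≤ d) (j j' : Fin n) (hjj : j ≠ j')
    (l l' : Fin d) (hl : 1 ≤ (l : ℕ)) (hl' : 1 ≤ (l' : ℕ)) :
    extAnc n d (Rsys n d j j' l l') * Za n d =
      ((1 : ℂ) / 2) • ⁅Ranc n d j l, ⁅Ranc n d j' l', Za n d⁆⁆ := by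
  rw [extAnc_eq_kronecker, Rsys_eq_siteKetBra, Za_eq_kronecker, Ranc_eq_ancillaExchange,
    Ranc_eq_ancillaExchange, stmt16_general hjj]
  module

end
end

section
/- Let n ≥ 1 and d ≥ 2. Every diagonal matrix H indexed by (Fin n → Fin d) with real diagonal entries can be written as H = (Tr(H)/d^n) • 1 + D, where D lies in the real span of the set of products {Z^{(l_1)}_{j_1} * Z^{(l_2)}_{j_2} * ⋯ * Z^{(l_t)}_{j_t} : 1 ≤ t ≤ n, j_1 < j_2 < ⋯ < j_t in Fin n, 1 ≤ l_r ≤ d-1}. In particular, every such H lies in the real span of the identity together with these products. -/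
/-!
STATEMENT 17: Every diagonal matrix with real entries decomposes as its trace part plus an
element of the real span of the products `Z^{(l_1)}_{j_1} ⋯ Z^{(l_t)}_{j_t}` with
`1 ≤ t ≤ n`, `j_1 < ⋯ < j_t` and `1 ≤ l_r ≤ d-1`.
-/

open Matrix

noncomputable section

/-- `Z^{(l)}_j`: the Pauli-Z operator of the two-level subsystem spanned by levels `l-1`
and `l` of site `j`: diagonal, with entry `1` at `ρ` if `ρ j = l-1`, `-1` if `ρ j = l`,
`0` otherwise. -/
def Zld (n d : ℕ) (j : Fin n) (l : Fin d) : Matrix (Fin n → Fin d) (Fin n → Fin d) ℂ :=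
  Matrix.diagonal fun ρ => if ρ j = fpred l then 1 else if ρ j = l then -1 else 0

/-!
On a single site with `m + 1` levels, the constant function `1` and the differences
`Pi.single l.castSucc 1 - Pi.single l.succ 1` span all functions, and each difference sums to `0`.
Hence the products over the sites of such functions span all functions on configurations, and a
product with at least one nonconstant factor sums to `0`. Summing an expansion of `f` into products
over all configurations therefore identifies the coefficient of `1` as the mean of `f`. The
diagonal embedding turns this into the claim about matrices, since it is multiplicative and turns
sums into traces.
-/

open scoped Pointwise

lemma eq_top_of_forall_pi_single_one_mem {R X : Type*} [Semiring R] [Finite X] [DecidableEq X]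
    {V : Submodule R (X → R)} (hV : ∀ x, Pi.single x 1 ∈ V) : V = ⊤ := by
  rw [eq_top_iff, ← (Pi.basisFun R X).span_eq, Submodule.span_le]
  rintro _ ⟨x, rfl⟩
  simpa only [Pi.basisFun_apply, SetLike.mem_coe] using hV x

lemma prod_mem_prod_submodule {ι R A : Type*} [CommSemiring R] [CommSemiring A] [Algebra R A]
    (s : Finset ι) {V : ι → Submodule R A} {a : ι → A} (ha : ∀ i ∈ s, a i ∈ V i) :
    ∏ i ∈ s, a i ∈ ∏ i ∈ s, V i := by
  have hspan : ∏ i ∈ s, V i = Submodule.span R (∏ i ∈ s, (V i : Set A)) := by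
    simp_rw [← Submodule.prod_span, Submodule.span_eq]
  exact hspan ▸ Submodule.subset_span (Set.finsetProd_mem_finsetProd s _ _ ha)

lemma comp_mem_span_range_comp {R X Y κ : Type*} [Semiring R] (φ : X → Y) {v : κ → Y → R}
    {u : Y → R} (hu : u ∈ Submodule.span R (Set.range v)) :
    u ∘ φ ∈ Submodule.span R (Set.range fun k => v k ∘ φ) := by
  have hmap := Submodule.mem_map_of_mem (f := LinearMap.funLeft R R φ) hu
  rwa [Submodule.map_span, ← Set.range_comp] at hmap

section SitewiseProducts

variable {ι R : Type*} [Fintype ι] [CommSemiring R] {α κ : ι → Type*}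

/-- The elementary tensor `⨂ i, w i (L i)`, realised as a function of `ρ : ∀ i, α i`, where `w i`
is a family of functions on the site `α i` and `L i` selects a member of it. -/
def sitewiseProd (w : ∀ i, κ i → α i → R) (L : ∀ i, κ i) : (∀ i, α i) → R :=
  ∏ i, w i (L i) ∘ Function.eval i

lemma sitewiseProd_apply (w : ∀ i, κ i → α i → R) (L : ∀ i, κ i) (ρ : ∀ i, α i) :
    sitewiseProd w L ρ = ∏ i, w i (L i) (ρ i) :=
  Finset.prod_apply _ _ _

lemma sitewiseProd_eq_prod_orderEmbOfFin [LinearOrder ι] {w : ∀ i, κ i → α i → R}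
    {L : ∀ i, κ i} {s : Finset ι} (hs : ∀ i ∉ s, w i (L i) = 1) :
    sitewiseProd w L = ∏ r, w (s.orderEmbOfFin rfl r) (L (s.orderEmbOfFin rfl r)) ∘
      Function.eval (s.orderEmbOfFin rfl r) := by
  have hsupport : ∏ i ∈ s, w i (L i) ∘ Function.eval i = sitewiseProd w L :=
    Finset.prod_subset s.subset_univ fun i _ hi => by rw [hs i hi]; rfl
  rw [← hsupport]
  conv_lhs => rw [← s.map_orderEmbOfFin_univ rfl, Finset.prod_map]
  rfl

lemma range_sitewiseProd (w : ∀ i, κ i → α i → R) :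
    Set.range (sitewiseProd w) = ∏ i, Set.range fun k => w i k ∘ Function.eval i := by
  ext f
  rw [Set.mem_fintype_prod]
  constructor
  · rintro ⟨L, rfl⟩
    exact ⟨_, fun i => ⟨L i, rfl⟩, rfl⟩
  · rintro ⟨g, hg, rfl⟩
    choose L hL using hg
    exact ⟨L, Finset.prod_congr rfl fun i _ => hL i⟩

lemma prod_comp_eval_mem_span_range_sitewiseProd {w : ∀ i, κ i → α i → R} {u : ∀ i, α i → R}
    (hu : ∀ i, u i ∈ Submodule.span R (Set.range (w i))) :
    ∏ i, u i ∘ Function.eval i ∈ Submodule.span R (Set.range (sitewiseProd w)) := by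
  rw [range_sitewiseProd, ← Submodule.prod_span]
  exact prod_mem_prod_submodule _ fun i _ => comp_mem_span_range_comp (Function.eval i) (hu i)

lemma pi_single_one_eq_prod_comp_eval [∀ i, DecidableEq (α i)] (σ : ∀ i, α i) :
    (Pi.single σ 1 : (∀ i, α i) → R) =
      ∏ i, (Pi.single (σ i) 1 : α i → R) ∘ Function.eval i := by
  ext ρ
  simp [Pi.single_apply, Fintype.prod_ite_zero, funext_iff]

theorem span_range_sitewiseProd_eq_top [∀ i, Finite (α i)] {w : ∀ i, κ i → α i → R}
    (hw : ∀ i, Submodule.span R (Set.range (w i)) = ⊤) :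
    Submodule.span R (Set.range (sitewiseProd w)) = ⊤ := by
  classical
  refine eq_top_of_forall_pi_single_one_mem fun σ => ?_
  rw [pi_single_one_eq_prod_comp_eval]
  exact prod_comp_eval_mem_span_range_sitewiseProd fun i => hw i ▸ Submodule.mem_top

variable [DecidableEq ι] [∀ i, Fintype (α i)]

lemma sum_sitewiseProd (w : ∀ i, κ i → α i → R) (L : ∀ i, κ i) :
    ∑ ρ, sitewiseProd w L ρ = ∏ i, ∑ x, w i (L i) x := by
  simp_rw [sitewiseProd_apply]
  exact (Fintype.prod_sum fun i => w i (L i)).symm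

lemma sum_eq_zero_of_mem_span_sitewiseProd {w : ∀ i, κ i → α i → R} {k₀ : ∀ i, κ i}
    (hsum : ∀ i k, k ≠ k₀ i → ∑ x, w i k x = 0) {g : (∀ i, α i) → R}
    (hg : g ∈ Submodule.span R (sitewiseProd w '' {k₀}ᶜ)) : ∑ ρ, g ρ = 0 := by
  let total : ((∀ i, α i) → R) →ₗ[R] R := ∑ ρ, LinearMap.proj ρ
  have htotal (f) : total f = ∑ ρ, f ρ := by simp [total]
  suffices hle : Submodule.span R (sitewiseProd w '' {k₀}ᶜ) ≤ LinearMap.ker total from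
    htotal g ▸ hle hg
  rw [Submodule.span_le]
  rintro _ ⟨L, hL, rfl⟩
  obtain ⟨i, hi⟩ := Function.ne_iff.mp hL
  rw [SetLike.mem_coe, LinearMap.mem_ker, htotal, sum_sitewiseProd]
  exact Finset.prod_eq_zero (Finset.mem_univ i) (hsum i _ hi)

theorem exists_eq_smul_one_add_mem_span_sitewiseProd {w : ∀ i, κ i → α i → R} {k₀ : ∀ i, κ i}
    (hw : ∀ i, Submodule.span R (Set.range (w i)) = ⊤) (hone : ∀ i, w i (k₀ i) = 1)
    (hsum : ∀ i k, k ≠ k₀ i → ∑ x, w i k x = 0) (f : (∀ i, α i) → R) :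
    ∃ (a : R), ∃ g ∈ Submodule.span R (sitewiseProd w '' {k₀}ᶜ),
      f = a • 1 + g ∧ ∑ ρ, f ρ = Fintype.card (∀ i, α i) * a := by
  have hk₀ : sitewiseProd w k₀ = 1 := by ext ρ; simp [sitewiseProd_apply, hone]
  have hrange : Set.range (sitewiseProd w) = insert 1 (sitewiseProd w '' {k₀}ᶜ) := by
    rw [← hk₀, ← Set.image_insert_eq, Set.insert_eq, Set.union_compl_self, Set.image_univ]
  have hf : f ∈ Submodule.span R (insert 1 (sitewiseProd w '' {k₀}ᶜ)) := by
    rw [← hrange, span_range_sitewiseProd_eq_top hw]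
    exact Submodule.mem_top
  obtain ⟨a, g, hg, rfl⟩ := Submodule.mem_span_insert.mp hf
  refine ⟨a, g, hg, rfl, ?_⟩
  simp [Finset.sum_add_distrib, sum_eq_zero_of_mem_span_sitewiseProd hsum hg]

end SitewiseProducts

section LevelFunctions

variable (R : Type*) [CommRing R] {m : ℕ}

/-- The functions on the `m + 1` levels of one site from which products over the sites are formed:
at index `l.succ` the diagonal of the Pauli-Z operator of the levels `l` and `l + 1`, and at index
`0`, which labels no such operator, the constant `1`, encoding the absence of a factor. -/
def levelFun : Fin (m + 1) → Fin (m + 1) → R :=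
  Fin.cons 1 fun l => Pi.single l.castSucc 1 - Pi.single l.succ 1

lemma levelFun_zero : levelFun R (0 : Fin (m + 1)) = 1 := rfl

lemma levelFun_succ (l : Fin m) :
    levelFun R l.succ = Pi.single l.castSucc 1 - Pi.single l.succ 1 := rfl

lemma sum_levelFun_of_ne_zero {l : Fin (m + 1)} (hl : l ≠ 0) : ∑ x, levelFun R l x = 0 := by
  obtain ⟨l, rfl⟩ := Fin.exists_succ_eq.mpr hl
  simp [levelFun_succ]

lemma single_sub_single_zero_mem_span_levelFun (k : Fin (m + 1)) :
    (Pi.single k 1 - Pi.single 0 1 : Fin (m + 1) → R) ∈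
      Submodule.span R (Set.range (levelFun R)) := by
  induction k using Fin.induction with
  | zero => simp
  | succ l ih =>
    have hl : levelFun R l.succ ∈ Submodule.span R (Set.range (levelFun R)) :=
      Submodule.subset_span ⟨l.succ, rfl⟩
    simpa [levelFun_succ] using Submodule.sub_mem _ ih hl

theorem span_range_levelFun_eq_top (hm : IsUnit ((m + 1 : ℕ) : R)) :
    Submodule.span R (Set.range (levelFun R (m := m))) = ⊤ := by
  set V := Submodule.span R (Set.range (levelFun R (m := m)))
  have hdiff : ∀ k, (Pi.single k 1 - Pi.single 0 1 : Fin (m + 1) → R) ∈ V :=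
    single_sub_single_zero_mem_span_levelFun R
  have hone : (1 : Fin (m + 1) → R) ∈ V := Submodule.subset_span ⟨0, rfl⟩
  have hzero : (Pi.single 0 1 : Fin (m + 1) → R) ∈ V := by
    rw [← V.smul_mem_iff_of_isUnit hm]
    have hexpand : ((m + 1 : ℕ) : R) • (Pi.single 0 1 : Fin (m + 1) → R) =
        1 - ∑ k, (Pi.single k 1 - Pi.single 0 1) := by
      have hsingle : ∑ k, (Pi.single k 1 : Fin (m + 1) → R) = 1 := Finset.univ_sum_single 1
      rw [Finset.sum_sub_distrib, hsingle, sub_sub_cancel, Finset.sum_const, Finset.card_univ,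
        Fintype.card_fin, Nat.cast_smul_eq_nsmul]
    rw [hexpand]
    exact V.sub_mem hone (V.sum_mem fun k _ => hdiff k)
  refine eq_top_of_forall_pi_single_one_mem fun k => ?_
  simpa using V.add_mem (hdiff k) hzero

end LevelFunctions

section DiagonalMatrices

/-- The embedding of real functions on `X` as the diagonal complex matrices with real entries, as
a homomorphism of real algebras. -/
def realDiagonal (X : Type*) [Fintype X] [DecidableEq X] : (X → ℝ) →ₐ[ℝ] Matrix X X ℂ :=
  (Matrix.diagonalAlgHom ℝ).comp (Complex.ofRealAm.compLeft X)

lemma realDiagonal_apply {X : Type*} [Fintype X] [DecidableEq X] (f : X → ℝ) :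
    realDiagonal X f = Matrix.diagonal fun x => (f x : ℂ) := rfl

variable {n m : ℕ}

lemma realDiagonal_levelFun (j : Fin n) {l : Fin (m + 1)} (hl : l ≠ 0) :
    realDiagonal (Fin n → Fin (m + 1)) (levelFun ℝ l ∘ Function.eval j) = Zld n (m + 1) j l := by
  obtain ⟨l, rfl⟩ := Fin.exists_succ_eq.mpr hl
  have hpred : fpred l.succ = l.castSucc := rfl
  have hne : l.castSucc ≠ l.succ := Fin.castSucc_lt_succ.ne
  rw [realDiagonal_apply, Zld, hpred]
  congr 1 with ρ
  simp only [levelFun_succ, Function.comp_apply, Function.eval, Pi.sub_apply, Pi.single_apply]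
  split_ifs with hcast hsucc hsucc
  · exact absurd (hcast.symm.trans hsucc) hne
  all_goals simp

lemma realDiagonal_prod_levelFun {t : ℕ} (js : Fin t → Fin n) {ls : Fin t → Fin (m + 1)}
    (hls : ∀ r, ls r ≠ 0) :
    realDiagonal (Fin n → Fin (m + 1)) (∏ r, levelFun ℝ (ls r) ∘ Function.eval (js r)) =
      (List.ofFn fun r => Zld n (m + 1) (js r) (ls r)).prod := by
  have hfactor : (realDiagonal (Fin n → Fin (m + 1)) ∘
      fun r => levelFun ℝ (ls r) ∘ Function.eval (js r)) = fun r => Zld n (m + 1) (js r) (ls r) :=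
    funext fun r => realDiagonal_levelFun (js r) (hls r)
  rw [← List.prod_ofFn, map_list_prod, List.map_ofFn, hfactor]

lemma exists_realDiagonal_sitewiseProd_levelFun_eq {L : Fin n → Fin (m + 1)} (hL : L ≠ 0) :
    ∃ (t : ℕ) (_ : 1 ≤ t) (_ : t ≤ n) (js : Fin t → Fin n) (ls : Fin t → Fin (m + 1)),
      StrictMono js ∧ (∀ r, 1 ≤ (ls r : ℕ)) ∧
      realDiagonal _ (sitewiseProd (fun _ => levelFun ℝ) L) =
        (List.ofFn fun r => Zld n (m + 1) (js r) (ls r)).prod := by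
  let s : Finset (Fin n) := {j | L j ≠ 0}
  have hmem : ∀ j, j ∈ s ↔ L j ≠ 0 := by simp [s]
  have hls : ∀ r, L (s.orderEmbOfFin rfl r) ≠ 0 := fun r =>
    (hmem _).mp (s.orderEmbOfFin_mem rfl r)
  obtain ⟨j, hj⟩ := Function.ne_iff.mp hL
  refine ⟨s.card, Finset.card_pos.mpr ⟨j, (hmem j).mpr hj⟩, by simpa using s.card_le_univ,
    s.orderEmbOfFin rfl, fun r => L (s.orderEmbOfFin rfl r), OrderEmbedding.strictMono _,
    fun r => Nat.one_le_iff_ne_zero.mpr (Fin.val_ne_zero_iff.mpr (hls r)), ?_⟩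
  have hone : ∀ j ∉ s, levelFun ℝ (L j) = 1 := fun j hj => by
    rw [not_not.mp fun hLj => hj ((hmem j).mpr hLj), levelFun_zero]
  rw [sitewiseProd_eq_prod_orderEmbOfFin hone, realDiagonal_prod_levelFun _ hls]

end DiagonalMatrices

theorem stmt17 (n d : ℕ) (hn : 1 ≤ n) (hd : 2 ≤ d) (h : (Fin n → Fin d) → ℝ) :
    ∃ D ∈ Submodule.span ℝ
        {M : Matrix (Fin n → Fin d) (Fin n → Fin d) ℂ |
          ∃ (t : ℕ) (_ : 1 ≤ t) (_ : t ≤ n) (js : Fin t → Fin n) (ls : Fin t → Fin d),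
            StrictMono js ∧ (∀ r, 1 ≤ (ls r : ℕ)) ∧
            M = (List.ofFn fun r => Zld n d (js r) (ls r)).prod},
      Matrix.diagonal (fun ρ => (h ρ : ℂ)) =
        ((Matrix.diagonal fun ρ => (h ρ : ℂ)).trace / (d : ℂ) ^ n) •
            (1 : Matrix (Fin n → Fin d) (Fin n → Fin d) ℂ) + D := by
  obtain ⟨m, rfl⟩ : ∃ m, d = m + 1 := ⟨d - 1, by omega⟩
  have hunit : IsUnit ((m + 1 : ℕ) : ℝ) := (Nat.cast_ne_zero.mpr m.succ_ne_zero).isUnit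
  obtain ⟨a, g, hg, hf, hsum⟩ := exists_eq_smul_one_add_mem_span_sitewiseProd
    (k₀ := fun _ : Fin n => 0) (fun _ => span_range_levelFun_eq_top ℝ hunit)
    (fun _ => levelFun_zero ℝ) (fun _ _ => sum_levelFun_of_ne_zero ℝ) h
  refine ⟨realDiagonal _ g, ?_, ?_⟩
  · have hmap := Submodule.mem_map_of_mem (f := (realDiagonal _).toLinearMap) hg
    rw [Submodule.map_span] at hmap
    refine Submodule.span_mono ?_ hmap
    rintro _ ⟨_, ⟨L, hL, rfl⟩, rfl⟩
    exact exists_realDiagonal_sitewiseProd_levelFun_eq hL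
  · have htrace : (Matrix.diagonal fun ρ => (h ρ : ℂ)).trace / ((m + 1 : ℕ) : ℂ) ^ n = a := by
      have hne : ((m + 1 : ℕ) : ℂ) ^ n ≠ 0 := pow_ne_zero n (Nat.cast_ne_zero.mpr m.succ_ne_zero)
      rw [Matrix.trace_diagonal, ← Complex.ofReal_sum, hsum, Fintype.card_fun, Fintype.card_fin,
        Fintype.card_fin, div_eq_iff hne]
      push_cast
      ring
    rw [htrace, Complex.coe_smul, ← map_one (realDiagonal _), ← map_smul, ← map_add, ← hf,
      realDiagonal_apply]

end
end

section
/- Let G be a finite group, d ≥ 1, and u : G →* (Matrix (Fin d) (Fin d) ℂ)ˣ a representation with every u g unitary; let U_n g denote the n-fold tensor power of u g on the index type (Fin n → Fin d). Let ι be a finite index type and suppose H = Σ_{j ∈ ι} h_j where each h_j is k-local, and H commutes with U_n g for every g ∈ G. Define h̃_j := (1/|G|) • Σ_{g ∈ G} (U_n g) * h_j * (U_n g)⁻¹. Then each h̃_j is k-local, each h̃_j commutes with U_n g for every g, and H = Σ_{j ∈ ι} h̃_j. (Any G-invariant Hamiltonian that is a sum of k-local terms is also a sum of k-local G-invariant terms.)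 -/
/-! STATEMENT 19: Twirling: any `G`-invariant Hamiltonian that is a sum of `k`-local terms
is also a sum of `k`-local `G`-invariant terms, obtained by group-averaging each term. -/

open Matrix

/-- The `m`-fold tensor power of the single-site representation `u`:
`(U_m g) x y = ∏_j (u g) (x j) (y j)`. -/
noncomputable def Un (G : Type) [Group G] (d : ℕ) (u : G →* (Matrix (Fin d) (Fin d) ℂ)ˣ)
    (m : ℕ) (g : G) : Matrix (Fin m → Fin d) (Fin m → Fin d) ℂ :=
  fun x y => ∏ j, (u g : Matrix (Fin d) (Fin d) ℂ) (x j) (y j)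

/-- The twirl `h̃ = (1/|G|) Σ_g (U_n g) h (U_n g)⁻¹` of a matrix over a finite group. -/
noncomputable def twirl (G : Type) [Group G] [Fintype G] (d n : ℕ)
    (u : G →* (Matrix (Fin d) (Fin d) ℂ)ˣ)
    (A : Matrix (Fin n → Fin d) (Fin n → Fin d) ℂ) :
    Matrix (Fin n → Fin d) (Fin n → Fin d) ℂ :=
  ((1 : ℂ) / (Fintype.card G : ℂ)) • ∑ g : G, Un G d u n g * A * (Un G d u n g)⁻¹

/-! An operator is supported on a set `S` of sites exactly when it commutes with every product
operator acting trivially on `S`. Conjugation by an invertible product operator permutes the latter,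
so it preserves the algebra of operators supported on `S`, and hence so does averaging over the
conjugates. The remaining claims say that averaging projects onto the invariants of the conjugation
action. -/

section PiKronecker

variable {ι R : Type*} {κ : ι → Type*} [Fintype ι] [DecidableEq ι] [∀ i, Fintype (κ i)]
  [∀ i, DecidableEq (κ i)] [CommSemiring R]

/-- The Kronecker product of a finite family of square matrices, i.e. the matrix of the product
operator `⨂ i, M i`. It is bundled as a monoid homomorphism so that it acts on units as well. -/
def piKronecker : (∀ i, Matrix (κ i) (κ i) R) →* Matrix (∀ i, κ i) (∀ i, κ i) R where
  toFun M := of fun x y ↦ ∏ i, M i (x i) (y i)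
  map_one' := by
    ext x y
    simp only [of_apply, Pi.one_apply, one_apply, Fintype.prod_boole, funext_iff]
  map_mul' M N := by
    ext x y
    simp only [of_apply, Pi.mul_apply, mul_apply, Finset.prod_univ_sum, Fintype.piFinset_univ,
      Finset.prod_mul_distrib]

theorem piKronecker_apply (M : ∀ i, Matrix (κ i) (κ i) R) (x y : ∀ i, κ i) :
    piKronecker M x y = ∏ i, M i (x i) (y i) := rfl

theorem piKronecker_apply_eq_zero {M : ∀ i, Matrix (κ i) (κ i) R} {x y : ∀ i, κ i} (i : ι)
    (hi : M i (x i) (y i) = 0) : piKronecker M x y = 0 :=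
  Finset.prod_eq_zero (Finset.mem_univ i) hi

variable (R) in
/-- The product operator acting as the identity on `S` and as the matrix unit `|p i⟩⟨q i|` at each
site `i ∉ S`, so that it replaces the configuration `q` off `S` by `p`. -/
def matrixUnitOff (S : Finset ι) (p q : ∀ i, κ i) : Matrix (∀ i, κ i) (∀ i, κ i) R :=
  piKronecker (S.piecewise 1 fun i ↦ single (p i) (q i) 1)

variable {S : Finset ι}

theorem matrixUnitOff_apply (p q x y : ∀ i, κ i) :
    matrixUnitOff R S p q x y =
      if (∀ i ∈ S, x i = y i) ∧ ∀ i ∉ S, p i = x i ∧ q i = y i then 1 else 0 := by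
  have entry (i : ι) :
      (S.piecewise 1 fun i ↦ single (p i) (q i) 1 : ∀ i, Matrix (κ i) (κ i) R) i (x i) (y i) =
        if (i ∈ S → x i = y i) ∧ (i ∉ S → p i = x i ∧ q i = y i) then 1 else 0 := by
    by_cases hi : i ∈ S
    · simp [hi, one_apply]
    · simp [hi, single_apply]
  simp only [matrixUnitOff, piKronecker_apply, entry, Fintype.prod_boole, forall_and]

theorem matrixUnitOff_mul_apply {p x : ∀ i, κ i} (hx : ∀ i ∉ S, x i = p i)
    (q y : ∀ i, κ i) (A : Matrix (∀ i, κ i) (∀ i, κ i) R) :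
    (matrixUnitOff R S p q * A) x y = A (S.piecewise x q) y := by
  rw [mul_apply, Finset.sum_eq_single (S.piecewise x q)]
  · rw [matrixUnitOff_apply, if_pos, one_mul]
    exact ⟨fun i hi ↦ by simp [hi], fun i hi ↦ by simp [hi, hx]⟩
  · intro z _ hz
    rw [matrixUnitOff_apply, if_neg, zero_mul]
    rintro ⟨on, off⟩
    refine hz (funext fun i ↦ ?_)
    by_cases hi : i ∈ S
    · simp [hi, on]
    · simp [hi, off]
  · simp

theorem mul_matrixUnitOff_apply {q y : ∀ i, κ i} (hy : ∀ i ∉ S, y i = q i)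
    (p x : ∀ i, κ i) (A : Matrix (∀ i, κ i) (∀ i, κ i) R) :
    (A * matrixUnitOff R S p q) x y = A x (S.piecewise y p) := by
  rw [mul_apply, Finset.sum_eq_single (S.piecewise y p)]
  · rw [matrixUnitOff_apply, if_pos, mul_one]
    exact ⟨fun i hi ↦ by simp [hi], fun i hi ↦ by simp [hi, hy]⟩
  · intro z _ hz
    rw [matrixUnitOff_apply, if_neg, mul_zero]
    rintro ⟨on, off⟩
    refine hz (funext fun i ↦ ?_)
    by_cases hi : i ∈ S
    · simp [hi, on]
    · simp [hi, off]
  · simp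

theorem mul_matrixUnitOff_apply_eq_zero {q y : ∀ i, κ i} {j : ι} (hj : j ∉ S)
    (hne : q j ≠ y j) (p x : ∀ i, κ i) (A : Matrix (∀ i, κ i) (∀ i, κ i) R) :
    (A * matrixUnitOff R S p q) x y = 0 := by
  rw [mul_apply]
  refine Finset.sum_eq_zero fun z _ ↦ ?_
  rw [matrixUnitOff_apply, if_neg fun h ↦ hne (h.2 j hj).2, mul_zero]

end PiKronecker

section Locality

/-- The operator `A` on a product of sites acts as the identity outside `S`, i.e. has the form
`B ⊗ 1`, expressed through its matrix entries as in `IsKLocal`. -/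
structure IsLocalOn {ι R : Type*} {κ : ι → Type*} [Zero R] (S : Finset ι)
    (A : Matrix (∀ i, κ i) (∀ i, κ i) R) : Prop where
  apply_eq_zero : ∀ x y, (∃ j, j ∉ S ∧ x j ≠ y j) → A x y = 0
  apply_eq_apply : ∀ x y x' y', (∀ j ∈ S, x j = x' j) → (∀ j ∈ S, y j = y' j) →
    (∀ j ∉ S, x j = y j) → (∀ j ∉ S, x' j = y' j) → A x y = A x' y'

theorem isKLocal_iff_exists_isLocalOn {n d k : ℕ}
    {A : Matrix (Fin n → Fin d) (Fin n → Fin d) ℂ} :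
    IsKLocal n d k A ↔ ∃ S : Finset (Fin n), S.card ≤ k ∧ IsLocalOn S A :=
  exists_congr fun _ ↦ and_congr_right' ⟨fun ⟨hzero, heq⟩ ↦ ⟨hzero, heq⟩,
    fun ⟨hzero, heq⟩ ↦ ⟨hzero, heq⟩⟩

variable {ι R : Type*} {κ : ι → Type*} [Fintype ι] [DecidableEq ι] [∀ i, Fintype (κ i)]
  [∀ i, DecidableEq (κ i)] [CommSemiring R] {S : Finset ι}
  {A : Matrix (∀ i, κ i) (∀ i, κ i) R} {M : ∀ i, Matrix (κ i) (κ i) R}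

theorem IsLocalOn.mul_piKronecker_apply (hA : IsLocalOn S A) (hM : ∀ i ∈ S, M i = 1)
    (x y : ∀ i, κ i) :
    (A * piKronecker M) x y = A x (S.piecewise y x) * piKronecker M (S.piecewise y x) y := by
  rw [mul_apply]
  refine Finset.sum_eq_single _ (fun z _ hz ↦ ?_) (by simp)
  obtain ⟨i, hi⟩ := Function.ne_iff.mp hz
  by_cases hiS : i ∈ S
  · have hzy : z i ≠ y i := by simpa [hiS] using hi
    rw [piKronecker_apply_eq_zero i (by rw [hM i hiS, one_apply_ne hzy]), mul_zero]
  · have hxz : x i ≠ z i := by simpa [hiS, eq_comm] using hi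
    rw [hA.apply_eq_zero x z ⟨i, hiS, hxz⟩, zero_mul]

theorem IsLocalOn.piKronecker_mul_apply (hA : IsLocalOn S A) (hM : ∀ i ∈ S, M i = 1)
    (x y : ∀ i, κ i) :
    (piKronecker M * A) x y = piKronecker M x (S.piecewise x y) * A (S.piecewise x y) y := by
  rw [mul_apply]
  refine Finset.sum_eq_single _ (fun z _ hz ↦ ?_) (by simp)
  obtain ⟨i, hi⟩ := Function.ne_iff.mp hz
  by_cases hiS : i ∈ S
  · have hxz : x i ≠ z i := by simpa [hiS, eq_comm] using hi
    rw [piKronecker_apply_eq_zero i (by rw [hM i hiS, one_apply_ne hxz]), zero_mul]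
  · have hzy : z i ≠ y i := by simpa [hiS] using hi
    rw [hA.apply_eq_zero z y ⟨i, hiS, hzy⟩, mul_zero]

theorem IsLocalOn.commute_piKronecker (hA : IsLocalOn S A) (hM : ∀ i ∈ S, M i = 1) :
    Commute (piKronecker M) A := by
  ext x y
  have entry_A : A (S.piecewise x y) y = A x (S.piecewise y x) :=
    hA.apply_eq_apply _ _ _ _ (fun i hi ↦ by simp [hi]) (fun i hi ↦ by simp [hi])
      (fun i hi ↦ by simp [hi]) (fun i hi ↦ by simp [hi])
  have entry_M : piKronecker M x (S.piecewise x y) = piKronecker M (S.piecewise y x) y := by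
    simp only [piKronecker_apply]
    refine Finset.prod_congr rfl fun i _ ↦ ?_
    by_cases hi : i ∈ S
    · simp [hi, hM i hi]
    · simp [hi]
  rw [hA.piKronecker_mul_apply hM, hA.mul_piKronecker_apply hM, entry_A, entry_M, mul_comm]

theorem isLocalOn_of_commute_matrixUnitOff
    (hA : ∀ p q, Commute (matrixUnitOff R S p q) A) : IsLocalOn S A where
  apply_eq_zero x y := by
    rintro ⟨j, hj, hne⟩
    calc
      A x y = (matrixUnitOff R S x x * A) x y := by
        rw [matrixUnitOff_mul_apply fun _ _ ↦ rfl, Finset.piecewise_same]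
      _ = (A * matrixUnitOff R S x x) x y := by rw [(hA x x).eq]
      _ = 0 := mul_matrixUnitOff_apply_eq_zero hj hne x x A
  apply_eq_apply x y x' y' hx hy hxy hxy' := by
    have hy_eq : S.piecewise y' x = y :=
      (S.piecewise_congr (fun i hi ↦ (hy i hi).symm) hxy).trans (S.piecewise_same y)
    have hx_eq : S.piecewise x x' = x' :=
      (S.piecewise_congr hx fun _ _ ↦ rfl).trans (S.piecewise_same x')
    calc
      A x y = (A * matrixUnitOff R S x x') x y' := by
        rw [mul_matrixUnitOff_apply fun i hi ↦ (hxy' i hi).symm, hy_eq]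
      _ = (matrixUnitOff R S x x' * A) x y' := by rw [(hA x x').eq]
      _ = A x' y' := by rw [matrixUnitOff_mul_apply fun _ _ ↦ rfl, hx_eq]

variable (R κ S) in
/-- The algebra of operators supported on the sites in `S`, encoded as the commutant of the product
operators acting trivially on `S`. -/
def localSubalgebra : Subalgebra R (Matrix (∀ i, κ i) (∀ i, κ i) R) :=
  Subalgebra.centralizer R (piKronecker '' {M | ∀ i ∈ S, M i = 1})

theorem mem_localSubalgebra_iff_commute :
    A ∈ localSubalgebra R κ S ↔ ∀ M, (∀ i ∈ S, M i = 1) → Commute (piKronecker M) A :=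
  Set.forall_mem_image

theorem mem_localSubalgebra_iff_isLocalOn : A ∈ localSubalgebra R κ S ↔ IsLocalOn S A := by
  rw [mem_localSubalgebra_iff_commute]
  exact ⟨fun hA ↦ isLocalOn_of_commute_matrixUnitOff fun p q ↦
      hA _ fun _ hi ↦ S.piecewise_eq_of_mem _ _ hi,
    fun hA _ hM ↦ hA.commute_piKronecker hM⟩

theorem conj_piKronecker_mem_localSubalgebra (V : (∀ i, Matrix (κ i) (κ i) R)ˣ)
    (hA : A ∈ localSubalgebra R κ S) :
    piKronecker ↑V * A * piKronecker ↑V⁻¹ ∈ localSubalgebra R κ S := by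
  rw [mem_localSubalgebra_iff_commute] at hA ⊢
  intro M hM
  have hconj : ∀ i ∈ S, ((↑V⁻¹ : ∀ i, Matrix (κ i) (κ i) R) * M * ↑V) i = 1 := fun i hi ↦ by
    rw [Pi.mul_apply, Pi.mul_apply, hM i hi, mul_one, ← Pi.mul_apply, V.inv_mul, Pi.one_apply]
  have hcomm := (hA _ hconj).eq
  calc
    piKronecker M * (piKronecker ↑V * A * piKronecker ↑V⁻¹)
      = piKronecker ↑V * (piKronecker (↑V⁻¹ * M * ↑V) * A) * piKronecker ↑V⁻¹ := by
        simp only [← mul_assoc, ← map_mul, V.mul_inv, one_mul]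
    _ = piKronecker ↑V * (A * piKronecker (↑V⁻¹ * M * ↑V)) * piKronecker ↑V⁻¹ := by rw [hcomm]
    _ = piKronecker ↑V * A * piKronecker ↑V⁻¹ * piKronecker M := by
        simp only [mul_assoc, ← map_mul, V.mul_inv, mul_one]

end Locality

section Average

variable {k G V : Type*} [CommRing k] [Group G] [Fintype G] [Invertible (Fintype.card G : k)]
  [AddCommGroup V] [Module k V]

theorem averageMap_apply_eq_smul_sum (ρ : Representation k G V) (v : V) :
    ρ.averageMap v = ⅟(Fintype.card G : k) • ∑ g, ρ g v := by
  simp [GroupAlgebra.average]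

theorem averageMap_mem (ρ : Representation k G V) {W : Submodule k V}
    (hW : ∀ g, ∀ v ∈ W, ρ g v ∈ W) {v : V} (hv : v ∈ W) : ρ.averageMap v ∈ W := by
  rw [averageMap_apply_eq_smul_sum]
  exact W.smul_mem _ (W.sum_mem fun g _ ↦ hW g v hv)

end Average

section Conjugation

variable (k : Type*) {G B : Type*} [Group G]

/-- The representation of `G` on an algebra `B` by conjugation through a homomorphism `G →* Bˣ`;
its invariants are the elements commuting with the image of `G`. -/
def conjRepresentation [CommSemiring k] [Semiring B] [Algebra k B] (ρ : G →* Bˣ) :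
    Representation k G B :=
  (Representation.ofDistribMulAction k (ConjAct Bˣ) B).comp
    (ConjAct.toConjAct.toMonoidHom.comp ρ)

theorem conjRepresentation_apply [CommSemiring k] [Semiring B] [Algebra k B] (ρ : G →* Bˣ)
    (g : G) (b : B) :
    conjRepresentation k ρ g b = ρ g * b * ↑(ρ g)⁻¹ := rfl

theorem mem_invariants_conjRepresentation [CommRing k] [Ring B] [Algebra k B] (ρ : G →* Bˣ)
    {b : B} :
    b ∈ (conjRepresentation k ρ).invariants ↔ ∀ g, b * ρ g = ρ g * b := by
  rw [Representation.mem_invariants]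
  exact forall_congr' fun g ↦ (ρ g).mul_inv_eq_iff_eq_mul.trans eq_comm

end Conjugation

section TensorPower

variable {G R κ : Type*} [Group G] [CommSemiring R] [Fintype κ] [DecidableEq κ]

/-- The tensor power of a matrix representation of `G` over the sites `ι`, valued in units. -/
def tensorPower (ι : Type*) [Fintype ι] [DecidableEq ι] (u : G →* (Matrix κ κ R)ˣ) :
    G →* (Matrix (ι → κ) (ι → κ) R)ˣ :=
  (Units.map (piKronecker.comp (Pi.constMonoidHom ι (Matrix κ κ R)))).comp u

theorem conjRepresentation_tensorPower_mem_localSubalgebra {ι : Type*} [Fintype ι]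
    [DecidableEq ι] {S : Finset ι} (u : G →* (Matrix κ κ R)ˣ) (g : G)
    {A : Matrix (ι → κ) (ι → κ) R} (hA : A ∈ localSubalgebra R (fun _ ↦ κ) S) :
    conjRepresentation R (tensorPower ι u) g A ∈ localSubalgebra R (fun _ ↦ κ) S :=
  conj_piKronecker_mem_localSubalgebra (Units.map (Pi.constMonoidHom ι (Matrix κ κ R)) (u g)) hA

end TensorPower

section Twirl

variable {G : Type} [Group G] {d n : ℕ} (u : G →* (Matrix (Fin d) (Fin d) ℂ)ˣ)

theorem coe_tensorPower_eq_Un (g : G) : (tensorPower (Fin n) u g).val = Un G d u n g := rfl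

theorem twirl_eq_averageMap [Fintype G] [Invertible (Fintype.card G : ℂ)]
    (A : Matrix (Fin n → Fin d) (Fin n → Fin d) ℂ) :
    twirl G d n u A = (conjRepresentation ℂ (tensorPower (Fin n) u)).averageMap A := by
  simp only [averageMap_apply_eq_smul_sum, conjRepresentation_apply, coe_units_inv,
    coe_tensorPower_eq_Un, invOf_eq_inv, twirl, one_div]

end Twirl

theorem stmt19_general (G : Type) [Group G] [Fintype G] (d n k : ℕ)
    (u : G →* (Matrix (Fin d) (Fin d) ℂ)ˣ) {ι : Type*} [Fintype ι]
    (h : ι → Matrix (Fin n → Fin d) (Fin n → Fin d) ℂ)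
    (hloc : ∀ j, IsKLocal n d k (h j))
    (hinv : ∀ g : G, (∑ j, h j) * Un G d u n g = Un G d u n g * (∑ j, h j)) :
    (∀ j, IsKLocal n d k (twirl G d n u (h j))) ∧
    (∀ j (g : G), twirl G d n u (h j) * Un G d u n g = Un G d u n g * twirl G d n u (h j)) ∧
    (∑ j, h j) = ∑ j, twirl G d n u (h j) := by
  let : Invertible (Fintype.card G : ℂ) :=
    invertibleOfNonzero (Nat.cast_ne_zero.mpr Fintype.card_ne_zero)
  let ρ := conjRepresentation ℂ (tensorPower (Fin n) u)
  simp only [twirl_eq_averageMap]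
  refine ⟨fun j ↦ ?_, fun j ↦ ?_, ?_⟩
  · obtain ⟨S, hS, hlocal⟩ := isKLocal_iff_exists_isLocalOn.mp (hloc j)
    refine isKLocal_iff_exists_isLocalOn.mpr ⟨S, hS, ?_⟩
    rw [← mem_localSubalgebra_iff_isLocalOn] at hlocal ⊢
    exact averageMap_mem ρ (W := (localSubalgebra ℂ _ S).toSubmodule)
      (fun g _ ↦ conjRepresentation_tensorPower_mem_localSubalgebra u g) hlocal
  · exact (mem_invariants_conjRepresentation ℂ _).mp (ρ.averageMap_invariant (h j))
  · have hsum : ∑ j, h j ∈ ρ.invariants := (mem_invariants_conjRepresentation ℂ _).mpr hinv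
    rw [← map_sum, ρ.averageMap_id _ hsum]

theorem stmt19 (G : Type) [Group G] [Fintype G] (d n k : ℕ) (hd : 1 ≤ d)
    (u : G →* (Matrix (Fin d) (Fin d) ℂ)ˣ)
    (hu : ∀ g, (u g : Matrix (Fin d) (Fin d) ℂ) * (u g : Matrix (Fin d) (Fin d) ℂ)ᴴ = 1)
    (ι : Type) [Fintype ι]
    (h : ι → Matrix (Fin n → Fin d) (Fin n → Fin d) ℂ)
    (hloc : ∀ j, IsKLocal n d k (h j))
    (hinv : ∀ g : G, (∑ j, h j) * Un G d u n g = Un G d u n g * (∑ j, h j)) :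
    (∀ j, IsKLocal n d k (twirl G d n u (h j))) ∧
    (∀ j (g : G), twirl G d n u (h j) * Un G d u n g = Un G d u n g * twirl G d n u (h j)) ∧
    (∑ j, h j) = ∑ j, twirl G d n u (h j) :=
  stmt19_general G d n k u h hloc hinv
end
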